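/- arXiv:1611.06196 — 6 statements merged into one kernel-verified Lean document; each statement's English description precedes it below -/
import Mathlib

section
/- Let n ≥ 5, let p be a prime, and let G be the symmetric group Sₙ or the alternating group Aₙ acting on X = (𝔽_p)ⁿ by permuting coordinates. Let U = {(a₁,…,aₙ) ∈ X : Σᵢ aᵢ = 0}, W = {(a,…,a) : a ∈ 𝔽_p}, and let V = U/(U ∩ W) be the fully deleted permutation module. Then for every maximal subgroup H of G, V is a cyclic 𝔽_pH-module: there exists v ∈ V such that the 𝔽_p-linear span of the H-orbit of v is all of V. -/
/-!
The vector `u = e_a - e_b` generates, for a suitable pair of points `a`, `b`. Relating `x` and `y`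
when `e_x - e_y` lies in the span of the `H`-orbit of `u` gives an `H`-invariant equivalence
relation containing `(a, b)`, and the differences `e_x - e_y` span the zero-sum vectors, so it is
enough that the only `H`-invariant equivalence relation containing `(a, b)` is `⊤`.

If `R` is a nontrivial proper `H`-invariant equivalence relation, maximality makes `H` contain every
even permutation which maps each `R`-class to itself. When `R` has fewer than `n - 2` classes, these
can move `b` to any `R`-equivalent point while fixing a given `a` outside the class of `b`; hence an
`H`-invariant relation containing `(a, b)` contains the whole `R`-class of `b`. For intransitive `H`
take `R` with an orbit and its complement as classes, and `a`, `b` in different classes; for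
transitive `H` take `R` maximal among the proper invariant relations, and `a`, `b` not equivalent.
-/

theorem inf_le_of_isCoatom_subgroupOf {Γ : Type*} [Group Γ] {G H K : Subgroup Γ}
    (hH : IsCoatom (H.subgroupOf G)) (hHK : H ≤ K) (hGK : ¬G ≤ K) : G ⊓ K ≤ H := by
  rcases hH.le_iff.1 (Subgroup.comap_mono hHK : H.subgroupOf G ≤ K.subgroupOf G) with htop | heq
  · exact absurd (Subgroup.subgroupOf_eq_top.1 htop) hGK
  · calc G ⊓ K = H ⊓ G := by rw [inf_comm, Subgroup.subgroupOf_inj.1 heq]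
      _ ≤ H := inf_le_left

section InvariantRelations

variable {α : Type*}

/-- The group of permutations preserving the equivalence relation `R`, that is, permuting its
classes. The relation `R` is invariant under a permutation group `H` when `H ≤ relStabilizer R`. -/
def relStabilizer (R : Setoid α) : Subgroup (Equiv.Perm α) where
  carrier := {σ | ∀ x y, R (σ x) (σ y) ↔ R x y}
  mul_mem' hσ hτ x y := (hσ _ _).trans (hτ x y)
  one_mem' _ _ := Iff.rfl
  inv_mem' {σ} hσ x y := by simpa using (hσ (σ⁻¹ x) (σ⁻¹ y)).symm

/-- The group of permutations mapping each class of the equivalence relation `R` to itself. -/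
def classStabilizer (R : Setoid α) : Subgroup (Equiv.Perm α) where
  carrier := {σ | ∀ x, R (σ x) x}
  mul_mem' hσ hτ x := R.trans (hσ _) (hτ x)
  one_mem' := R.refl
  inv_mem' {σ} hσ x := by simpa using R.symm (hσ (σ⁻¹ x))

theorem classStabilizer_le_relStabilizer (R : Setoid α) :
    classStabilizer R ≤ relStabilizer R := fun _ hσ x y =>
  ⟨fun h => R.trans (R.symm (hσ x)) (R.trans h (hσ y)),
    fun h => R.trans (hσ x) (R.trans h (R.symm (hσ y)))⟩

theorem le_relStabilizer_of_forall_rel {H : Subgroup (Equiv.Perm α)} {R : Setoid α}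
    (h : ∀ σ ∈ H, ∀ x y, R x y → R (σ x) (σ y)) : H ≤ relStabilizer R := fun σ hσ x y =>
  ⟨fun hxy => by simpa using h σ⁻¹ (inv_mem hσ) _ _ hxy, h σ hσ x y⟩

theorem exists_not_rel_of_ne_top {R : Setoid α} (hR : R ≠ ⊤) : ∃ a b, ¬R a b := by
  contrapose! hR
  exact Setoid.eq_top_iff.2 hR

theorem exists_ne_rel_of_ne_bot {R : Setoid α} (hR : R ≠ ⊥) : ∃ a b, a ≠ b ∧ R a b := by
  contrapose! hR
  exact eq_bot_iff.2 fun {a b} hab => by_contra fun hne => hR a b hne hab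

theorem exists_ne_rel_and_ne [Finite α] {R : Setoid α}
    (hcard : Nat.card (Quotient R) + 2 < Nat.card α) (a b : α) :
    ∃ x y, x ≠ y ∧ R x y ∧ (x ≠ a ∧ x ≠ b) ∧ y ≠ a ∧ y ≠ b := by
  classical
  have := Fintype.ofFinite α
  have hlt : (Finset.univ : Finset (Quotient R)).card < ({a, b}ᶜ : Finset α).card := by
    have := Finset.card_le_two (a := a) (b := b)
    rw [Nat.card_eq_fintype_card, Nat.card_eq_fintype_card] at hcard
    rw [Finset.card_compl, Finset.card_univ]
    omega
  obtain ⟨x, hx, y, hy, hxy, heq⟩ :=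
    Finset.exists_ne_map_eq_of_card_lt_of_maps_to hlt (f := Quotient.mk R) (by simp [Set.MapsTo])
  exact ⟨x, y, hxy, Quotient.eq.1 heq, by simpa using hx, by simpa using hy⟩

theorem two_mul_card_quotient_le [Finite α] {H : Subgroup (Equiv.Perm α)}
    [MulAction.IsPretransitive H α] {R : Setoid α} (hHR : H ≤ relStabilizer R) (hR : R ≠ ⊥) :
    2 * Nat.card (Quotient R) ≤ Nat.card α := by
  classical
  have := Fintype.ofFinite α
  obtain ⟨o, e, hoe, hRoe⟩ := exists_ne_rel_of_ne_bot hR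
  have two_le_card_class : ∀ q ∈ Finset.univ.image (Quotient.mk R),
      2 ≤ (Finset.univ.filter fun x => Quotient.mk R x = q).card := by
    simp only [Finset.mem_image, Finset.mem_univ, true_and, forall_exists_index,
      forall_apply_eq_imp_iff]
    intro x
    obtain ⟨⟨σ, hσ⟩, rfl : σ o = x⟩ := MulAction.exists_smul_eq H o x
    refine Finset.one_lt_card.2 ⟨σ o, by simp, σ e, ?_, σ.injective.ne hoe⟩
    simpa using Quotient.sound (R.symm ((hHR hσ o e).2 hRoe))
  have hcard := Finset.mul_card_image_le_card Finset.univ 2 two_le_card_class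
  rwa [Finset.image_univ_of_surjective Quotient.mk_surjective, Finset.card_univ,
    Finset.card_univ, ← Nat.card_eq_fintype_card, ← Nat.card_eq_fintype_card] at hcard

theorem swap_mem_classStabilizer [DecidableEq α] {R : Setoid α} {x y : α} (hxy : R x y) :
    Equiv.swap x y ∈ classStabilizer R := by
  intro z
  rw [Equiv.swap_apply_def]
  split_ifs with hzx hzy
  · exact hzx ▸ R.symm hxy
  · exact hzy ▸ hxy
  · exact R.refl z

end InvariantRelations

section AlternatingGroup

variable {α : Type*} [Fintype α] [DecidableEq α]

theorem swap_mul_swap_mem_alternatingGroup {a b c d : α} (hab : a ≠ b) (hcd : c ≠ d) :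
    Equiv.swap a b * Equiv.swap c d ∈ alternatingGroup α := by
  simp [Equiv.Perm.mem_alternatingGroup, Equiv.Perm.sign_swap hab, Equiv.Perm.sign_swap hcd]

theorem not_alternatingGroup_le_relStabilizer (hα : 4 ≤ Nat.card α) {R : Setoid α}
    (hbot : R ≠ ⊥) (htop : R ≠ ⊤) : ¬alternatingGroup α ≤ relStabilizer R := by
  intro hle
  have : MulAction.IsMultiplyPretransitive (alternatingGroup α) α 2 :=
    have := alternatingGroup.isMultiplyPretransitive α
    MulAction.isMultiplyPretransitive_of_le (n := Nat.card α - 2) (by omega) (by omega)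
  obtain ⟨x, y, hxy, hRxy⟩ := exists_ne_rel_of_ne_bot hbot
  obtain ⟨a, b, hab⟩ := exists_not_rel_of_ne_top htop
  have hne : a ≠ b := fun h => hab (h ▸ R.refl a)
  obtain ⟨⟨σ, hσ⟩, rfl : σ x = a, rfl : σ y = b⟩ :=
    MulAction.is_two_pretransitive_iff.1 this hxy hne
  exact hab ((hle hσ x y).2 hRxy)

theorem exists_mem_alternatingGroup_inf_classStabilizer {R : Setoid α}
    (hcard : Nat.card (Quotient R) + 2 < Nat.card α) {a b c : α} (hab : ¬R a b) (hbc : R b c) :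
    ∃ σ ∈ alternatingGroup α ⊓ classStabilizer R, σ a = a ∧ σ b = c := by
  rcases eq_or_ne b c with rfl | hne
  · exact ⟨1, one_mem _, rfl, rfl⟩
  obtain ⟨x, y, hxy, hRxy, ⟨hxa, hxb⟩, hya, hyb⟩ := exists_ne_rel_and_ne hcard a b
  have hne_ab : a ≠ b := fun h => hab (h ▸ R.refl a)
  have hne_ac : a ≠ c := fun h => hab (h ▸ R.symm hbc)
  -- The second transposition, which may move `c`, makes the permutation even.
  refine ⟨Equiv.swap b c * Equiv.swap x y, ⟨swap_mul_swap_mem_alternatingGroup hne hxy,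
    mul_mem (swap_mem_classStabilizer hbc) (swap_mem_classStabilizer hRxy)⟩, ?_, ?_⟩
  · rw [Equiv.Perm.mul_apply, Equiv.swap_apply_of_ne_of_ne hxa.symm hya.symm,
      Equiv.swap_apply_of_ne_of_ne hne_ab hne_ac]
  · rw [Equiv.Perm.mul_apply, Equiv.swap_apply_of_ne_of_ne hxb.symm hyb.symm,
      Equiv.swap_apply_left]

variable {G H : Subgroup (Equiv.Perm α)}

theorem rel_trans_of_not_rel (hG : alternatingGroup α ≤ G) (hH : IsCoatom (H.subgroupOf G))
    {R S : Setoid α} (hHR : H ≤ relStabilizer R) (hHS : H ≤ relStabilizer S)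
    (hcard : Nat.card (Quotient R) + 2 < Nat.card α) {a b c : α} (hSab : S a b) (hRab : ¬R a b)
    (hRbc : R b c) : S a c := by
  have hbot : R ≠ ⊥ := by
    obtain ⟨x, y, hxy, hRxy, -⟩ := exists_ne_rel_and_ne hcard a b
    rintro rfl
    exact hxy hRxy
  have htop : R ≠ ⊤ := by
    rintro rfl
    exact hRab trivial
  have hpos : 0 < Nat.card (Quotient R) := Finite.card_pos_iff.2 ⟨Quotient.mk R a⟩
  have hGR : ¬G ≤ relStabilizer R := fun h =>
    not_alternatingGroup_le_relStabilizer (by omega) hbot htop (hG.trans h)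
  obtain ⟨σ, ⟨hσ, hσR⟩, ha, hb⟩ := exists_mem_alternatingGroup_inf_classStabilizer hcard hRab hRbc
  have hσH : σ ∈ H :=
    inf_le_of_isCoatom_subgroupOf hH hHR hGR ⟨hG hσ, classStabilizer_le_relStabilizer R hσR⟩
  simpa only [ha, hb] using (hHS hσH a b).2 hSab

theorem exists_forall_rel_imp_eq_top_of_not_isPretransitive (hα : 5 ≤ Nat.card α)
    (hG : alternatingGroup α ≤ G) (hH : IsCoatom (H.subgroupOf G))
    (htrans : ¬MulAction.IsPretransitive H α) :
    ∃ a b : α, ∀ S : Setoid α, H ≤ relStabilizer S → S a b → S = ⊤ := by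
  obtain ⟨a, b, hab⟩ : ∃ a b : α, b ∉ MulAction.orbit H a := by
    contrapose! htrans
    exact ⟨htrans⟩
  let R : Setoid α := Setoid.ker (· ∈ MulAction.orbit H a)
  have hHR : H ≤ relStabilizer R := fun σ hσ => classStabilizer_le_relStabilizer R fun x => by
    have horbit : MulAction.orbit H (σ x) = MulAction.orbit H x :=
      MulAction.orbit_smul (⟨σ, hσ⟩ : H) x
    rw [Setoid.ker_def, ← MulAction.orbit_eq_iff, horbit, MulAction.orbit_eq_iff]
  have hcard : Nat.card (Quotient R) + 2 < Nat.card α := by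
    have hle : Nat.card (Quotient R) ≤ Nat.card Prop :=
      Nat.card_le_card_of_injective _ (Setoid.kerLift_injective _)
    rw [Nat.card_eq_fintype_card (α := Prop), Fintype.card_prop] at hle
    omega
  have hRab : ¬R a b := fun h => hab (h.mp (MulAction.mem_orbit_self a))
  refine ⟨a, b, fun S hHS hSab => Setoid.eq_top_iff.2 ?_⟩
  suffices hall : ∀ x, S a x from fun x y => S.trans (S.symm (hall x)) (hall y)
  intro x
  by_cases hRbx : R b x
  · exact rel_trans_of_not_rel hG hH hHR hHS hcard hSab hRab hRbx
  · have hxa : x ∈ MulAction.orbit H a :=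
      by_contra fun hxa => hRbx (propext (iff_of_false hab hxa))
    have hRax : R a x := propext (iff_of_true (MulAction.mem_orbit_self a) hxa)
    exact S.trans hSab (rel_trans_of_not_rel hG hH hHR hHS hcard (S.symm hSab)
      (fun h => hRab (R.symm h)) hRax)

theorem exists_forall_rel_imp_eq_top_of_isPretransitive (hα : 5 ≤ Nat.card α)
    (hG : alternatingGroup α ≤ G) (hH : IsCoatom (H.subgroupOf G))
    [MulAction.IsPretransitive H α] :
    ∃ a b : α, ∀ S : Setoid α, H ≤ relStabilizer S → S a b → S = ⊤ := by
  have : Nontrivial α := Finite.one_lt_card_iff_nontrivial.1 (by omega)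
  have hbot_ne_top : (⊥ : Setoid α) ≠ ⊤ := fun h =>
    let ⟨x, y, hxy⟩ := exists_pair_ne α
    hxy (Setoid.eq_top_iff.1 h x y)
  have : Finite (Setoid α) := Finite.of_injective (⇑) fun R S => Setoid.eq_iff_rel_eq.2
  obtain ⟨R, ⟨hHR, hR⟩, hmax⟩ :=
    {R : Setoid α | H ≤ relStabilizer R ∧ R ≠ ⊤}.toFinite.exists_maximal
      ⟨⊥, fun σ _ x y => σ.injective.eq_iff, hbot_ne_top⟩
  obtain ⟨a, b, hRab⟩ := exists_not_rel_of_ne_top hR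
  refine ⟨a, b, fun S hHS hSab => ?_⟩
  have hRS : R ≤ S := by
    rcases eq_or_ne R ⊥ with rfl | hbot
    · exact bot_le
    have hcard : Nat.card (Quotient R) + 2 < Nat.card α := by
      have := two_mul_card_quotient_le hHR hbot
      omega
    have hclass : ∀ c, R b c → S b c := fun c hRbc => S.trans (S.symm hSab)
      (rel_trans_of_not_rel hG hH hHR hHS hcard hSab hRab hRbc)
    intro x y hRxy
    obtain ⟨⟨σ, hσ⟩, hσx : σ x = b⟩ := MulAction.exists_smul_eq H x b
    rw [← hHS hσ, hσx]
    exact hclass _ (hσx ▸ (hHR hσ x y).2 hRxy)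
  by_contra hS
  exact hRab (hmax ⟨hHS, hS⟩ hRS hSab)

theorem exists_forall_rel_imp_eq_top_of_isCoatom (hα : 5 ≤ Nat.card α)
    (hG : alternatingGroup α ≤ G) (hH : IsCoatom (H.subgroupOf G)) :
    ∃ a b : α, ∀ S : Setoid α, H ≤ relStabilizer S → S a b → S = ⊤ := by
  by_cases htrans : MulAction.IsPretransitive H α
  · exact exists_forall_rel_imp_eq_top_of_isPretransitive hα hG hH
  · exact exists_forall_rel_imp_eq_top_of_not_isPretransitive hα hG hH htrans

end AlternatingGroup

section PermutationModule

variable {α k : Type*} [Ring k]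

theorem comp_mem_span_orbit {H : Subgroup (Equiv.Perm α)} {u f : α → k} {σ : Equiv.Perm α}
    (hσ : σ ∈ H) (hf : f ∈ Submodule.span k {f : α → k | ∃ σ ∈ H, f = u ∘ ⇑σ}) :
    f ∘ σ ∈ Submodule.span k {f : α → k | ∃ σ ∈ H, f = u ∘ ⇑σ} := by
  refine (Submodule.map_span_le (LinearMap.funLeft k k σ) _ _).2 ?_ (Submodule.mem_map_of_mem hf)
  rintro _ ⟨τ, hτ, rfl⟩
  exact Submodule.subset_span ⟨τ * σ, mul_mem hτ hσ, rfl⟩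

variable [DecidableEq α]

/-- The equivalence relation on coordinates relating `x` and `y` when the difference `e_x - e_y` of
basis vectors lies in `M`. -/
def differenceRel (M : Submodule k (α → k)) : Setoid α :=
  Setoid.ker fun x => M.mkQ (Pi.single x 1)

theorem differenceRel_iff {M : Submodule k (α → k)} {x y : α} :
    differenceRel M x y ↔ (Pi.single x 1 - Pi.single y 1 : α → k) ∈ M :=
  Submodule.Quotient.eq M

theorem le_relStabilizer_differenceRel {H : Subgroup (Equiv.Perm α)} {M : Submodule k (α → k)}
    (hM : ∀ σ ∈ H, ∀ f ∈ M, f ∘ σ ∈ M) : H ≤ relStabilizer (differenceRel M) := by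
  refine le_relStabilizer_of_forall_rel fun σ hσ x y hxy => ?_
  rw [differenceRel_iff] at hxy ⊢
  simpa only [Pi.sub_comp, Pi.single_comp_equiv, Equiv.Perm.inv_def, Equiv.symm_symm] using
    hM σ⁻¹ (inv_mem hσ) _ hxy

theorem mem_of_differenceRel_eq_top [Fintype α] {M : Submodule k (α → k)}
    (hM : differenceRel M = ⊤) {f : α → k} (hf : ∑ i, f i = 0) : f ∈ M := by
  rcases isEmpty_or_nonempty α with hempty | ⟨⟨a⟩⟩
  · exact Subsingleton.elim f 0 ▸ M.zero_mem
  have hsum : ∑ i, f i • (Pi.single i 1 - Pi.single a 1 : α → k) = f :=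
    calc ∑ i, f i • (Pi.single i 1 - Pi.single a 1 : α → k)
      _ = ∑ i, f i • Pi.single i 1 - (∑ i, f i) • Pi.single a 1 := by
        simp only [smul_sub, Finset.sum_sub_distrib, Finset.sum_smul]
      _ = f := by
        simp only [hf, zero_smul, sub_zero, ← Pi.single_smul, smul_eq_mul, mul_one,
          Finset.univ_sum_single]
  rw [← hsum]
  exact M.sum_mem fun i _ => M.smul_mem _ (differenceRel_iff.1 (Setoid.eq_top_iff.1 hM i a))

end PermutationModule

theorem fully_deleted_permutation_module_cyclic_general {α k : Type*} [Fintype α] [DecidableEq α]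
    [Ring k] (hα : 5 ≤ Nat.card α) {G H : Subgroup (Equiv.Perm α)} (hG : alternatingGroup α ≤ G)
    (hH : IsCoatom (H.subgroupOf G)) :
    ∃ u : α → k, ∑ i, u i = 0 ∧ ∀ f : α → k, ∑ i, f i = 0 →
      f ∈ Submodule.span k {f : α → k | ∃ σ ∈ H, f = u ∘ ⇑σ} := by
  obtain ⟨a, b, hab⟩ := exists_forall_rel_imp_eq_top_of_isCoatom hα hG hH
  refine ⟨Pi.single a 1 - Pi.single b 1, by simp, fun f hf => mem_of_differenceRel_eq_top ?_ hf⟩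
  exact hab _ (le_relStabilizer_differenceRel fun σ hσ f hf => comp_mem_span_orbit hσ hf)
    (differenceRel_iff.2 (Submodule.subset_span ⟨1, H.one_mem, rfl⟩))

/-- Let `n ≥ 5`, `p` prime, and let `G` be `Sₙ` or `Aₙ` acting on `X = (𝔽_p)ⁿ` by
permuting coordinates.  Let `U` be the zero-sum submodule and `W` the submodule of
constant vectors, so the fully deleted permutation module is `V = U/(U ∩ W)`.
Then for every maximal subgroup `H` of `G`, `V` is a cyclic `𝔽_p H`-module: there
is `u ∈ U` such that the span of the `H`-orbit of `u` together with `U ∩ W` is all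
of `U` (equivalently, the image of the orbit of `u + (U ∩ W)` spans `V`). -/
theorem fully_deleted_permutation_module_cyclic
    (n : ℕ) (hn : 5 ≤ n) (p : ℕ) (hp : p.Prime)
    (G : Subgroup (Equiv.Perm (Fin n)))
    (hG : G = ⊤ ∨ G = alternatingGroup (Fin n))
    (U : Submodule (ZMod p) (Fin n → ZMod p))
    (hU : ∀ f : Fin n → ZMod p, f ∈ U ↔ ∑ i, f i = 0)
    (W : Submodule (ZMod p) (Fin n → ZMod p))
    (hW : ∀ f : Fin n → ZMod p, f ∈ W ↔ ∃ a : ZMod p, f = fun _ => a)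
    (H : Subgroup (Equiv.Perm (Fin n))) (hHG : H ≤ G)
    (hH : IsCoatom (H.subgroupOf G)) :
    ∃ u ∈ U, U ≤ Submodule.span (ZMod p)
      ({f : Fin n → ZMod p | ∃ σ ∈ H, f = u ∘ ⇑σ} ∪ ↑(U ⊓ W)) := by
  obtain ⟨u, hu, hspan⟩ := fully_deleted_permutation_module_cyclic_general (k := ZMod p)
    (by simpa using hn) (hG.elim (fun h => h ▸ le_top) ge_of_eq) hH
  exact ⟨u, (hU u).2 hu, fun f hf =>
    Submodule.span_mono Set.subset_union_left (hspan f ((hU f).1 hf))⟩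
end

section
/- Let n ≥ 2, let p be a prime, and let H be a primitive subgroup of the symmetric group on {1,…,n} (that is, H is transitive and preserves no partition of {1,…,n} other than the partition into singletons and the trivial one-part partition). Let {e₁,…,eₙ} be the standard basis of (𝔽_p)ⁿ, on which H acts by permuting coordinates. Then the 𝔽_p-linear span of the H-orbit of e₁ − e₂ equals U = {(a₁,…,aₙ) : Σᵢ aᵢ = 0}. -/
/-- A subgroup `H` of the symmetric group on `Fin n` is primitive if it is
transitive and the only `H`-invariant equivalence relations (partitions) on
`Fin n` are equality (singletons) and the trivial all-relation (one part). -/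
def IsPrimitiveSubgroup {n : ℕ} (H : Subgroup (Equiv.Perm (Fin n))) : Prop :=
  (∀ a b : Fin n, ∃ σ ∈ H, σ a = b) ∧
    ∀ r : Setoid (Fin n),
      (∀ σ ∈ H, ∀ a b : Fin n, r a b → r (σ a) (σ b)) →
      r = ⊥ ∨ r = ⊤

/-!
For a submodule `N` of functions on `Ω`, the relation `eᵢ - eⱼ ∈ N` is an equivalence relation on
`Ω`, and it is `H`-invariant when `N` is. If `N` contains `eₐ - e_b` for some `a ≠ b`, primitivity
leaves only the all-relation, so `N` contains every difference of basis vectors, and these span the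
zero-sum functions.
-/

theorem single_comp_equiv {α β M : Type*} [DecidableEq α] [DecidableEq β] [Zero M]
    (e : α ≃ β) (i : β) (c : M) :
    (Pi.single i c : β → M) ∘ e = Pi.single (e.symm i) c := by
  ext j
  simp only [Function.comp_apply, Pi.single_apply, Equiv.eq_symm_apply]

theorem comp_mem_span_orbit_s8 {R Ω M : Type*} [Semiring R] [AddCommMonoid M] [Module R M]
    {H : Subgroup (Equiv.Perm Ω)} {v f : Ω → M} {σ : Equiv.Perm Ω} (hσ : σ ∈ H)
    (hf : f ∈ Submodule.span R {g : Ω → M | ∃ τ ∈ H, g = v ∘ ⇑τ}) :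
    f ∘ ⇑σ ∈ Submodule.span R {g : Ω → M | ∃ τ ∈ H, g = v ∘ ⇑τ} := by
  refine Submodule.span_le (p := (Submodule.span R _).comap (LinearMap.funLeft R M σ)) |>.mpr ?_ hf
  rintro _ ⟨τ, hτ, rfl⟩
  exact Submodule.subset_span ⟨τ * σ, H.mul_mem hτ hσ, rfl⟩

section ZeroSum

/-- The zero-sum module: finitely supported functions whose values add up to `0`. Finite support is
required explicitly because `∑ᶠ` is `0` by convention on functions of infinite support. -/
def zeroSumSubmodule (R Ω : Type*) [Semiring R] : Submodule R (Ω → R) where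
  carrier := {f | f.HasFiniteSupport ∧ ∑ᶠ i, f i = 0}
  zero_mem' := ⟨Function.hasFiniteSupport_zero, finsum_zero⟩
  add_mem' := by
    rintro f g ⟨hf, hf_sum⟩ ⟨hg, hg_sum⟩
    refine ⟨hf.add hg, ?_⟩
    simp only [Pi.add_apply, finsum_add_distrib hf hg, hf_sum, hg_sum, add_zero]
  smul_mem' := by
    rintro c f ⟨hf, hf_sum⟩
    refine ⟨hf.subset (Function.support_const_smul_subset c f), ?_⟩
    simp only [Pi.smul_apply, ← smul_finsum' c hf, hf_sum, smul_zero]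

theorem mem_zeroSumSubmodule_iff_sum_eq_zero {R Ω : Type*} [Semiring R] [Fintype Ω] {f : Ω → R} :
    f ∈ zeroSumSubmodule R Ω ↔ ∑ i, f i = 0 := by
  rw [← finsum_eq_sum_of_fintype]
  exact and_iff_right (Set.toFinite _)

variable {R Ω : Type*} [Ring R] [DecidableEq Ω]

theorem single_sub_single_mem_zeroSumSubmodule (a b : Ω) (c : R) :
    Pi.single a c - Pi.single b c ∈ zeroSumSubmodule R Ω := by
  have finite_support (i : Ω) : (Pi.single i c : Ω → R).HasFiniteSupport :=
    (Set.finite_singleton i).subset Pi.support_single_subset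
  have finsum_single (i : Ω) : ∑ᶠ j, (Pi.single i c : Ω → R) j = c := by
    rw [finsum_eq_single _ i fun j hj => Pi.single_eq_of_ne hj _, Pi.single_eq_same]
  refine ⟨(finite_support a).sub (finite_support b), ?_⟩
  simp only [Pi.sub_apply, finsum_sub_distrib (finite_support a) (finite_support b),
    finsum_single, sub_self]

theorem zeroSumSubmodule_le_of_forall_single_sub_single_mem {N : Submodule R (Ω → R)} {a : Ω}
    (hN : ∀ i, Pi.single i 1 - Pi.single a 1 ∈ N) : zeroSumSubmodule R Ω ≤ N := by
  rintro f ⟨hf, hf_sum⟩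
  have sum_eq_zero : ∑ i ∈ hf.toFinset, f i = 0 := by rw [← finsum_eq_sum f hf, hf_sum]
  have f_eq_sum_single : f = ∑ i ∈ hf.toFinset, f i • (Pi.single i 1 : Ω → R) := by
    ext j
    simpa [Finset.sum_apply, Pi.single_apply] using
      fun hj => Function.notMem_support.mp (mt hf.mem_toFinset.mpr hj)
  have f_eq : f = ∑ i ∈ hf.toFinset, f i • (Pi.single i 1 - Pi.single a 1 : Ω → R) := by
    simp only [smul_sub, Finset.sum_sub_distrib, ← Finset.sum_smul, sum_eq_zero, zero_smul,
      sub_zero, ← f_eq_sum_single]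
  rw [f_eq]
  exact N.sum_mem fun i _ => N.smul_mem _ (hN i)

end ZeroSum

section InvariantSubmodule

variable {R Ω : Type*} [Ring R] [DecidableEq Ω]

/-- The congruence of standard basis vectors modulo `N`, as an equivalence relation on their
indices: the partition of `Ω` to which primitivity is applied. -/
def basisCongruence (N : Submodule R (Ω → R)) : Setoid Ω where
  r i j := Pi.single i 1 - Pi.single j 1 ∈ N
  iseqv :=
    { refl := fun i => by simp only [sub_self, N.zero_mem]
      symm := fun h => by simpa only [neg_sub] using N.neg_mem h
      trans := fun h k => by simpa only [sub_add_sub_cancel] using N.add_mem h k }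

theorem basisCongruence_iff {N : Submodule R (Ω → R)} {i j : Ω} :
    basisCongruence N i j ↔ Pi.single i 1 - Pi.single j 1 ∈ N :=
  Iff.rfl

theorem basisCongruence_apply_perm {N : Submodule R (Ω → R)} {σ : Equiv.Perm Ω}
    (hN : ∀ f ∈ N, f ∘ ⇑σ.symm ∈ N) {i j : Ω} (hij : basisCongruence N i j) :
    basisCongruence N (σ i) (σ j) := by
  simpa only [basisCongruence_iff, Pi.sub_comp, single_comp_equiv, Equiv.symm_symm]
    using hN _ hij

theorem zeroSumSubmodule_le_of_invariant {H : Subgroup (Equiv.Perm Ω)}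
    (hH : ∀ r : Setoid Ω, (∀ σ ∈ H, ∀ i j, r i j → r (σ i) (σ j)) → r = ⊥ ∨ r = ⊤)
    {N : Submodule R (Ω → R)} (hN : ∀ σ ∈ H, ∀ f ∈ N, f ∘ ⇑σ ∈ N)
    {a b : Ω} (hab : a ≠ b) (hN_ab : Pi.single a 1 - Pi.single b 1 ∈ N) :
    zeroSumSubmodule R Ω ≤ N := by
  have congruence_ne_bot : basisCongruence N ≠ ⊥ := fun h =>
    hab ((Setoid.ext_iff.mp h a b).mp hN_ab)
  have congruence_eq_top : basisCongruence N = ⊤ :=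
    (hH _ fun σ hσ _ _ => basisCongruence_apply_perm (hN σ⁻¹ (H.inv_mem hσ))).resolve_left
      congruence_ne_bot
  exact zeroSumSubmodule_le_of_forall_single_sub_single_mem
    fun i => Setoid.eq_top_iff.mp congruence_eq_top i a

theorem primitive_orbit_spans_zero_sum_module_general {H : Subgroup (Equiv.Perm Ω)}
    (hH : ∀ r : Setoid Ω, (∀ σ ∈ H, ∀ i j, r i j → r (σ i) (σ j)) → r = ⊥ ∨ r = ⊤)
    {a b : Ω} (hab : a ≠ b) :
    Submodule.span R {f : Ω → R | ∃ σ ∈ H, f = (Pi.single a 1 - Pi.single b 1) ∘ ⇑σ} =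
      zeroSumSubmodule R Ω := by
  apply le_antisymm
  · rw [Submodule.span_le]
    rintro _ ⟨σ, -, rfl⟩
    rw [Pi.sub_comp, single_comp_equiv, single_comp_equiv]
    exact single_sub_single_mem_zeroSumSubmodule _ _ 1
  · exact zeroSumSubmodule_le_of_invariant hH (fun σ hσ _ => comp_mem_span_orbit_s8 hσ) hab
      (Submodule.subset_span ⟨1, H.one_mem, rfl⟩)

end InvariantSubmodule

/-- If `H` is a primitive subgroup of the symmetric group on `{1, …, n}` (`n ≥ 2`)
and `p` is a prime, then the `𝔽_p`-span of the `H`-orbit of `e₁ - e₂` is the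
zero-sum module `U = {(a₁, …, aₙ) : Σ aᵢ = 0}`. -/
theorem primitive_orbit_spans_zero_sum_module
    (n : ℕ) (hn : 2 ≤ n) (p : ℕ) (hp : p.Prime)
    (H : Subgroup (Equiv.Perm (Fin n))) (hH : IsPrimitiveSubgroup H)
    (U : Submodule (ZMod p) (Fin n → ZMod p))
    (hU : ∀ f : Fin n → ZMod p, f ∈ U ↔ ∑ i, f i = 0) :
    Submodule.span (ZMod p)
      {f : Fin n → ZMod p | ∃ σ ∈ H,
        f = (Pi.single (⟨0, by omega⟩ : Fin n) (1 : ZMod p)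
              - Pi.single (⟨1, by omega⟩ : Fin n) (1 : ZMod p)) ∘ ⇑σ} = U := by
  rw [primitive_orbit_spans_zero_sum_module_general hH.2 (by simp)]
  exact Submodule.ext fun f => mem_zeroSumSubmodule_iff_sum_eq_zero.trans (hU f).symm
end

section
/- Let q = p^k with p prime and k ≥ 1, let F be a finite field with |F| = q, let e be a divisor of q − 1, and let E be the subgroup of order e of the multiplicative group F^×. Let M be the group of permutations of F of the form x ↦ ax + b with a ∈ E and b ∈ F (a subgroup of the one-dimensional affine group AGL₁(q)). Let ℓ = min{ i ≥ 1 : e divides p^i − 1 } be the multiplicative order of p modulo e (note ℓ divides k). Then k/ℓ ≤ d(M) ≤ k/ℓ + 1. -/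
/-- The minimal number of generators of a group `G`. -/
noncomputable def minGen (G : Type*) [Group G] : ℕ :=
  sInf {n : ℕ | ∃ S : Finset G, S.card = n ∧ Subgroup.closure (S : Set G) = ⊤}

open IntermediateField

/-!
Let `K` be the subfield of `F` generated by `E`. A generating set of `M` must have images of `0`
spanning `F` over `K`, because the permutations in `M` whose value at `0` lies in a `K`-subspace
`W` preserve `W`. Conversely, conjugating translations by the linear maps `x ↦ a * x` with `a ∈ E`
shows that a generator of `E` and the translations by a `K`-basis of `F` generate `M`. Hence `d(M)`
is `dim_K F` or `dim_K F + 1`, and `dim_K F = k / ℓ` because the irreducible factors of the `e`-th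
cyclotomic polynomial over `ZMod p` have degree `ℓ`.
-/

theorem minGen_eq_rank (G : Type*) [Group G] [Group.FG G] : minGen G = Group.rank G := by
  obtain ⟨S, hcard, hS⟩ := Group.rank_spec G
  refine le_antisymm (Nat.sInf_le ⟨S, hcard, hS⟩) (le_csInf ⟨_, S, hcard, hS⟩ ?_)
  rintro _ ⟨T, rfl, hT⟩
  exact Group.rank_le hT

theorem rank_le_one_of_isCyclic (G : Type*) [Group G] [Group.FG G] [IsCyclic G] :
    Group.rank G ≤ 1 := by
  obtain ⟨g, hg⟩ := IsCyclic.exists_generator (α := G)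
  have hclosure : Subgroup.closure (({g} : Finset G) : Set G) = ⊤ := by
    rw [Finset.coe_singleton, ← Subgroup.zpowers_eq_closure, Subgroup.eq_top_iff']
    exact hg
  exact Group.rank_le hclosure

theorem exists_finset_card_eq_rank {G : Type*} [Group G] (H : Subgroup G) [Group.FG H] :
    ∃ S : Finset G, S.card = Group.rank H ∧ Subgroup.closure (S : Set G) = H := by
  obtain ⟨S, hcard, hS⟩ := Group.rank_spec H
  refine ⟨S.map (Function.Embedding.subtype _), by rw [Finset.card_map, hcard], ?_⟩
  rw [Finset.coe_map, Function.Embedding.coe_subtype, ← H.coe_subtype, ← MonoidHom.map_closure, hS,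
    ← MonoidHom.range_eq_map, H.range_subtype]

section AffineSubgroup

open Pointwise

variable {A : Type*} [CommRing A] {E : Subgroup Aˣ} {H : Subgroup (Equiv.Perm A)}

/-- The group of affine permutations `x ↦ a * x + b` of a commutative ring whose linear part `a`
lies in a given group of units `E`. For `A` a field of order `q` and `E = ⊤` this is `AGL₁(q)`. -/
def affineSubgroup (E : Subgroup Aˣ) : Subgroup (Equiv.Perm A) where
  carrier := {π | ∃ a ∈ E, ∃ b : A, ∀ x, π x = a * x + b}
  one_mem' := ⟨1, E.one_mem, 0, fun x ↦ by simp⟩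
  mul_mem' := by
    rintro π σ ⟨a, ha, b, hπ⟩ ⟨c, hc, d, hσ⟩
    refine ⟨a * c, E.mul_mem ha hc, a * d + b, fun x ↦ ?_⟩
    rw [Equiv.Perm.mul_apply, hσ, hπ, Units.val_mul]
    ring
  inv_mem' := by
    rintro π ⟨a, ha, b, hπ⟩
    refine ⟨a⁻¹, E.inv_mem ha, -(↑a⁻¹ * b), fun x ↦ ?_⟩
    rw [Equiv.Perm.inv_eq_iff_eq, hπ]
    linear_combination (b - x) * a.mul_inv

/-- The additive group of those `b` for which the translation `x ↦ b + x` belongs to `H`. -/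
def translations (H : Subgroup (Equiv.Perm A)) : AddSubgroup A :=
  H.toAddSubgroup.comap (AddAction.toPermHom A A)

theorem mem_translations {b : A} : b ∈ translations H ↔ AddAction.toPerm b ∈ H :=
  Iff.rfl

theorem addAction_toPerm_mem_affineSubgroup (E : Subgroup Aˣ) (b : A) :
    AddAction.toPerm b ∈ affineSubgroup E :=
  ⟨1, E.one_mem, b, fun x ↦ by simp [add_comm]⟩

theorem mulAction_toPerm_mem_affineSubgroup {a : Aˣ} (ha : a ∈ E) :
    MulAction.toPerm a ∈ affineSubgroup E :=
  ⟨a, ha, 0, fun x ↦ by simp [Units.smul_def]⟩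

theorem affineSubgroup_le (hE : ∀ a ∈ E, MulAction.toPerm a ∈ H) (hH : translations H = ⊤) :
    affineSubgroup E ≤ H := by
  rintro π ⟨a, ha, b, hπ⟩
  have hb : b ∈ translations H := hH ▸ AddSubgroup.mem_top b
  have hπ_eq : π = AddAction.toPerm b * MulAction.toPerm a := by
    ext x
    simp [hπ, Units.smul_def, add_comm]
  exact hπ_eq ▸ H.mul_mem hb (hE a ha)

theorem units_mul_mem_translations {a : Aˣ} {b : A} (ha : MulAction.toPerm a ∈ H)
    (hb : b ∈ translations H) : a * b ∈ translations H := by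
  have hconj : AddAction.toPerm (a * b) =
      (MulAction.toPerm a * AddAction.toPerm b * (MulAction.toPerm a)⁻¹ : Equiv.Perm A) := by
    rw [eq_mul_inv_iff_mul_eq]
    ext x
    simp [Units.smul_def]
  exact mem_translations.2 (hconj ▸ H.mul_mem (H.mul_mem ha hb) (H.inv_mem ha))

theorem mul_mem_translations {s : Set Aˣ} (hs : ∀ a ∈ s, MulAction.toPerm a ∈ H) {c : A}
    (hc : c ∈ Subring.closure (Units.val '' s)) {b : A} (hb : b ∈ translations H) :
    c * b ∈ translations H := by
  induction hc using Subring.closure_induction generalizing b with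
  | mem c hc =>
    obtain ⟨a, ha, rfl⟩ := hc
    exact units_mul_mem_translations (hs a ha) hb
  | zero => simp
  | one => simpa using hb
  | add c d _ _ hc hd => simpa [add_mul] using add_mem (hc hb) (hd hb)
  | neg c _ hc => simpa using hc hb
  | mul c d _ _ hc hd => simpa [mul_assoc] using hc (hd hb)

variable {R : Type*} [CommRing R] [Algebra R A]

theorem translations_eq_top {s : Set Aˣ} {t : Set A}
    (hs : ∀ a ∈ s, MulAction.toPerm a ∈ H) (ht : t ⊆ translations H)
    (hR : (algebraMap R A).range ≤ Subring.closure (Units.val '' s))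
    (hspan : Submodule.span R t = ⊤) : translations H = ⊤ := by
  refine eq_top_iff.2 fun b _ ↦ ?_
  have hb : b ∈ Submodule.span R t := hspan ▸ Submodule.mem_top
  induction hb using Submodule.span_induction with
  | mem b hb => exact ht hb
  | zero => exact zero_mem _
  | add b c _ _ hb hc => exact add_mem (hb trivial) (hc trivial)
  | smul r b _ hb =>
    rw [Algebra.smul_def]
    exact mul_mem_translations hs (hR ⟨r, rfl⟩) (hb trivial)

theorem closure_toPerm_image_union_eq_affineSubgroup {s : Set Aˣ} {t : Set A}
    (hs : Subgroup.closure s = E)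
    (hR : (algebraMap R A).range ≤ Subring.closure (Units.val '' (E : Set Aˣ)))
    (ht : Submodule.span R t = ⊤) :
    Subgroup.closure (MulAction.toPerm '' s ∪ AddAction.toPerm '' t) = affineSubgroup E := by
  set H : Subgroup (Equiv.Perm A) :=
    Subgroup.closure (MulAction.toPerm '' s ∪ AddAction.toPerm '' t)
  apply le_antisymm
  · rw [Subgroup.closure_le]
    rintro _ (⟨a, ha, rfl⟩ | ⟨b, -, rfl⟩)
    · exact mulAction_toPerm_mem_affineSubgroup (hs ▸ Subgroup.subset_closure ha)
    · exact addAction_toPerm_mem_affineSubgroup E b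
  · have hE : E ≤ H.comap (MulAction.toPermHom Aˣ A) := by
      rw [← hs, Subgroup.closure_le]
      exact fun a ha ↦ Subgroup.subset_closure (.inl ⟨a, ha, rfl⟩)
    have ht_mem : t ⊆ translations H := fun b hb ↦ Subgroup.subset_closure (.inr ⟨b, hb, rfl⟩)
    exact affineSubgroup_le hE (translations_eq_top hE ht_mem hR ht)

theorem rank_affineSubgroup_le [Module.Finite R A] [Group.FG E] [Group.FG (affineSubgroup E)]
    (hR : (algebraMap R A).range ≤ Subring.closure (Units.val '' (E : Set Aˣ))) :
    Group.rank (affineSubgroup E) ≤ Group.rank E + (⊤ : Submodule R A).spanFinrank := by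
  classical
  obtain ⟨s, hs_card, hs⟩ := exists_finset_card_eq_rank E
  obtain ⟨t, ht_card, ht⟩ :=
    (Module.Finite.fg_top (R := R) (M := A)).exists_span_finset_card_eq_spanFinrank
  let S : Finset (Equiv.Perm A) := s.image MulAction.toPerm ∪ t.image AddAction.toPerm
  have hS : Subgroup.closure (S : Set (Equiv.Perm A)) = affineSubgroup E := by
    simpa [S] using closure_toPerm_image_union_eq_affineSubgroup hs hR ht
  calc Group.rank (affineSubgroup E)
      = Group.rank (Subgroup.closure (S : Set (Equiv.Perm A))) := Subgroup.rank_congr hS.symm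
    _ ≤ S.card := Subgroup.rank_closure_finset_le_card S
    _ ≤ s.card + t.card :=
      (Finset.card_union_le _ _).trans (add_le_add Finset.card_image_le Finset.card_image_le)
    _ = Group.rank E + (⊤ : Submodule R A).spanFinrank := by rw [hs_card, ht_card]

theorem mem_stabilizer_of_apply_zero_mem {W : Submodule R A} {π : Equiv.Perm A}
    (hπ : π ∈ affineSubgroup E) (hE : ∀ a ∈ E, (a : A) ∈ (algebraMap R A).range) (hW : π 0 ∈ W) :
    π ∈ MulAction.stabilizer (Equiv.Perm A) (W : Set A) := by
  have hmul : ∀ a ∈ E, ∀ x ∈ W, (a : A) * x ∈ W := by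
    intro a ha x hx
    obtain ⟨r, hr⟩ := hE a ha
    rw [← hr, ← Algebra.smul_def]
    exact W.smul_mem r hx
  obtain ⟨a, ha, b, hab⟩ := hπ
  have hb : b ∈ W := by simpa [hab] using hW
  refine MulAction.mem_stabilizer_set.2 fun x ↦ ?_
  rw [Equiv.Perm.smul_def, hab, SetLike.mem_coe, SetLike.mem_coe, W.add_mem_iff_left hb]
  exact ⟨fun h ↦ by simpa using hmul a⁻¹ (E.inv_mem ha) _ h, hmul a ha x⟩

theorem span_image_zero_eq_top {S : Set (Equiv.Perm A)}
    (hE : ∀ a ∈ E, (a : A) ∈ (algebraMap R A).range)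
    (hS : Subgroup.closure S = affineSubgroup E) :
    Submodule.span R ((fun π ↦ π 0) '' S) = ⊤ := by
  set W := Submodule.span R ((fun π : Equiv.Perm A ↦ π 0) '' S)
  have hstab : affineSubgroup E ≤ MulAction.stabilizer (Equiv.Perm A) (W : Set A) := by
    rw [← hS, Subgroup.closure_le]
    exact fun π hπ ↦ mem_stabilizer_of_apply_zero_mem (hS ▸ Subgroup.subset_closure hπ) hE
      (Submodule.subset_span ⟨π, hπ, rfl⟩)
  refine eq_top_iff.2 fun b _ ↦ ?_
  have hb := hstab (addAction_toPerm_mem_affineSubgroup E b)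
  simpa using (MulAction.mem_stabilizer_set.1 hb 0).2 W.zero_mem

theorem spanFinrank_le_rank_affineSubgroup [Group.FG (affineSubgroup E)]
    (hE : ∀ a ∈ E, (a : A) ∈ (algebraMap R A).range) :
    (⊤ : Submodule R A).spanFinrank ≤ Group.rank (affineSubgroup E) := by
  obtain ⟨S, hcard, hS⟩ := exists_finset_card_eq_rank (affineSubgroup E)
  calc (⊤ : Submodule R A).spanFinrank
      = (Submodule.span R ((fun π ↦ π 0) '' (S : Set (Equiv.Perm A)))).spanFinrank := by
        rw [span_image_zero_eq_top hE hS]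
    _ ≤ ((fun π : Equiv.Perm A ↦ π 0) '' (S : Set (Equiv.Perm A))).ncard :=
      Submodule.spanFinrank_span_le_ncard_of_finite (S.finite_toSet.image _)
    _ ≤ S.card := (Set.ncard_image_le S.finite_toSet).trans_eq (Set.ncard_coe_finset S)
    _ = Group.rank (affineSubgroup E) := hcard

end AffineSubgroup

theorem sInf_dvd_pow_sub_one_eq_orderOf (e : ℕ) {p : ℕ} (hp : 0 < p) :
    sInf {i : ℕ | 1 ≤ i ∧ e ∣ p ^ i - 1} = orderOf (p : ZMod e) := by
  rw [orderOf, Function.minimalPeriod_eq_sInf_n_pos_IsPeriodicPt]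
  congr! 3 with i
  rw [isPeriodicPt_mul_iff_pow_eq_one, ← Nat.modEq_iff_dvd' (Nat.one_le_pow _ _ hp),
    ← ZMod.natCast_eq_natCast_iff, Nat.cast_pow, Nat.cast_one, eq_comm,
    Nat.one_le_iff_ne_zero, gt_iff_lt, Nat.pos_iff_ne_zero]

theorem finrank_adjoin_eq_orderOf {K L : Type*} [Field K] [Fintype K] [Field L] [Algebra K L]
    {n : ℕ} [NeZero n] {ζ : L} (hζ : IsPrimitiveRoot ζ n) :
    Module.finrank K K⟮ζ⟯ = orderOf (Fintype.card K : ZMod n) := by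
  obtain ⟨p, hchar⟩ := CharP.exists K
  obtain ⟨f, hp, hcard⟩ := FiniteField.card K p
  have : Fact p.Prime := ⟨hp⟩
  have : CharP L p := charP_of_injective_algebraMap' K p
  have hint : IsIntegral K ζ := (hζ.isIntegral (NeZero.pos n)).tower_top
  have hcop : p.Coprime n :=
    hp.coprime_iff_not_dvd.2 ((CharP.cast_eq_zero_iff L p n).not.1 hζ.neZero'.out)
  have hdvd : minpoly K ζ ∣ Polynomial.cyclotomic n K := by
    apply minpoly.dvd
    rw [Polynomial.aeval_def, ← Polynomial.eval_map, Polynomial.map_cyclotomic]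
    exact hζ.isRoot_cyclotomic (NeZero.pos n)
  rw [adjoin.finrank hint, Polynomial.natDegree_of_dvd_cyclotomic_of_irreducible hcard hcop hdvd
    (minpoly.irreducible hint), ← orderOf_units, ZMod.coe_unitOfCoprime, hcard]

theorem finrank_over_adjoin_eq_div_orderOf {K L : Type*} [Field K] [Fintype K] [Field L]
    [Algebra K L] {n : ℕ} [NeZero n] {ζ : L} (hζ : IsPrimitiveRoot ζ n) :
    Module.finrank K⟮ζ⟯ L = Module.finrank K L / orderOf (Fintype.card K : ZMod n) := by
  have hint : IsIntegral K ζ := (hζ.isIntegral (NeZero.pos n)).tower_top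
  have : FiniteDimensional K K⟮ζ⟯ := adjoin.finiteDimensional hint
  rw [← Module.finrank_mul_finrank K K⟮ζ⟯ L, ← finrank_adjoin_eq_orderOf hζ,
    Nat.mul_div_cancel_left _ Module.finrank_pos]

theorem finrank_over_adjoin_le_rank_affineSubgroup_zpowers (K : Type*) [Field K] {L : Type*}
    [Field L] [Finite L] [Algebra K L] (ζ : Lˣ) :
    Module.finrank K⟮(ζ : L)⟯ L ≤ Group.rank (affineSubgroup (Subgroup.zpowers ζ)) := by
  rw [Module.finrank_eq_spanFinrank_of_free]
  apply spanFinrank_le_rank_affineSubgroup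
  rintro _ ⟨n, rfl⟩
  exact ⟨⟨ζ, mem_adjoin_simple_self _ _⟩ ^ n, by simp⟩

theorem range_algebraMap_adjoin_eq_closure {p : ℕ} [Fact p.Prime] {F : Type*} [Field F]
    [Algebra (ZMod p) F] {ζ : F} (hζ : IsAlgebraic (ZMod p) ζ) :
    (algebraMap (ZMod p)⟮ζ⟯ F).range = Subring.closure {ζ} := by
  have : (algebraMap (ZMod p)⟮ζ⟯ F).range = (ZMod p)⟮ζ⟯.toSubalgebra.toSubring := by
    ext; simp
  rw [this, adjoin_simple_toSubalgebra_of_isAlgebraic hζ, Algebra.adjoin_eq_ring_closure]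
  apply le_antisymm
  · refine Subring.closure_le.2 (Set.union_subset ?_ Subring.subset_closure)
    rintro _ ⟨m, rfl⟩
    obtain ⟨m, rfl⟩ := ZMod.intCast_surjective m
    rw [map_intCast]
    exact intCast_mem _ m
  · exact Subring.closure_mono Set.subset_union_right

theorem rank_affineSubgroup_zpowers_le_finrank_over_adjoin_add_one (p : ℕ) [Fact p.Prime]
    {F : Type*} [Field F] [Finite F] [Algebra (ZMod p) F] (ζ : Fˣ) :
    Group.rank (affineSubgroup (Subgroup.zpowers ζ)) ≤
      Module.finrank (ZMod p)⟮(ζ : F)⟯ F + 1 := by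
  have hrange : (algebraMap (ZMod p)⟮(ζ : F)⟯ F).range ≤
      Subring.closure (Units.val '' (Subgroup.zpowers ζ : Set Fˣ)) := by
    rw [range_algebraMap_adjoin_eq_closure (IsAlgebraic.of_finite _ _)]
    exact Subring.closure_mono (Set.singleton_subset_iff.2 ⟨ζ, Subgroup.mem_zpowers ζ, rfl⟩)
  rw [Module.finrank_eq_spanFinrank_of_free]
  linarith [rank_affineSubgroup_le hrange, rank_le_one_of_isCyclic (Subgroup.zpowers ζ)]

/-- Let `q = p^k` with `p` prime, let `F` be a field of order `q`, let `e ∣ q - 1`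
and let `E` be the subgroup of order `e` of `F^×`.  Let `M ≤ AGL₁(q)` be the group
of permutations of `F` of the form `x ↦ a·x + b` with `a ∈ E`, `b ∈ F`, and let
`ℓ = min {i ≥ 1 : e ∣ p^i - 1}` be the multiplicative order of `p` modulo `e`.
Then `k/ℓ ≤ d(M) ≤ k/ℓ + 1`. -/
theorem affine_subgroup_generation
    (p k : ℕ) (hp : p.Prime) (hk : 1 ≤ k)
    (F : Type) [Field F] [Fintype F] (hF : Fintype.card F = p ^ k)
    (e : ℕ) (he : e ∣ p ^ k - 1)
    (E : Subgroup Fˣ) (hE : Nat.card E = e)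
    (M : Subgroup (Equiv.Perm F))
    (hM : ∀ π : Equiv.Perm F, π ∈ M ↔
      ∃ a ∈ E, ∃ b : F, ∀ x : F, π x = (a : F) * x + b)
    (ℓ : ℕ) (hℓ : ℓ = sInf {i : ℕ | 1 ≤ i ∧ e ∣ p ^ i - 1}) :
    k / ℓ ≤ minGen ↥M ∧ minGen ↥M ≤ k / ℓ + 1 := by
  have : Fact p.Prime := ⟨hp⟩
  have : CharP F p := charP_of_card_eq_prime_pow hF
  let : Algebra (ZMod p) F := ZMod.algebra F p
  obtain rfl : M = affineSubgroup E := Subgroup.ext hM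
  obtain ⟨ζ, rfl⟩ := E.isCyclic_iff_exists_zpowers_eq_top.1 inferInstance
  have : NeZero e := ⟨hE ▸ Nat.card_pos.ne'⟩
  have hζ : IsPrimitiveRoot (ζ : F) e := by
    rw [IsPrimitiveRoot.coe_units_iff, ← hE, Nat.card_zpowers]
    exact IsPrimitiveRoot.orderOf ζ
  have hk_finrank : Module.finrank (ZMod p) F = k :=
    Nat.pow_right_injective hp.two_le ((FiniteField.pow_finrank_eq_card p F).trans hF)
  have hdim : Module.finrank (ZMod p)⟮(ζ : F)⟯ F = k / ℓ := by
    rw [finrank_over_adjoin_eq_div_orderOf hζ, hk_finrank, ZMod.card, hℓ,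
      sInf_dvd_pow_sub_one_eq_orderOf e hp.pos]
  rw [minGen_eq_rank, ← hdim]
  exact ⟨finrank_over_adjoin_le_rank_affineSubgroup_zpowers (ZMod p) ζ,
    rank_affineSubgroup_zpowers_le_finrank_over_adjoin_add_one p ζ⟩
end

section
/- Let p be a prime, let k, ℓ, e be positive integers, let d ∈ {1,2}, and let s be a prime such that d·s·e = p^k − 1. Suppose ℓ is the multiplicative order of p modulo e, i.e. ℓ = min{ i ≥ 1 : e divides p^i − 1 } (so ℓ divides k). Then k = ℓ, or k = 2ℓ, or (p^k − 1)/(p^ℓ − 1) = s. -/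
/-!
With `q = p ^ ℓ`, `k = ℓ * m` and `G m = 1 + q + ⋯ + q ^ (m - 1)`, the relation
`d * s * e = q ^ m - 1` together with `e ∣ q - 1` gives `G m ∣ d * s`, hence `G m ∣ s * 2`.
If `m = 2 * j`, then `G m = (q + 1) * (1 + q ^ 2 + ⋯ + (q ^ 2) ^ (j - 1))`; a product of two
factors dividing `s * 2` has a factor dividing `2`, and `q + 1 > 2`, so `j = 1`.
If `m` is odd, then so is `G m` (whatever the parity of `q`), so `G m ∣ s`, that is
`G m = 1` or `G m = s`.
-/

open Finset

theorem dvd_or_dvd_of_mul_dvd_prime_mul {M : Type*} [CommMonoidWithZero M] [IsCancelMulZero M]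
    {s a b n : M} (hs : Prime s) (h : a * b ∣ s * n) : a ∣ n ∨ b ∣ n := by
  rcases hs.left_dvd_or_dvd_right_of_dvd_mul (dvd_of_mul_right_dvd h) with ⟨c, rfl⟩ | han
  · rw [mul_assoc, mul_dvd_mul_iff_left hs.ne_zero] at h
    exact .inr (dvd_of_mul_left_dvd h)
  · exact .inl han

theorem dvd_of_isLeast_dvd_pow_sub_one {p e ℓ k : ℕ}
    (hℓ : IsLeast {i : ℕ | 1 ≤ i ∧ e ∣ p ^ i - 1} ℓ) (hk : e ∣ p ^ k - 1) : ℓ ∣ k := by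
  obtain ⟨⟨hℓpos, heℓ⟩, hmin⟩ := hℓ
  have hgcd : e ∣ p ^ ℓ.gcd k - 1 :=
    Nat.pow_sub_one_gcd_pow_sub_one p ℓ k ▸ Nat.dvd_gcd heℓ hk
  have hle : ℓ ≤ ℓ.gcd k := hmin ⟨Nat.gcd_pos_of_pos_left k hℓpos, hgcd⟩
  exact Nat.gcd_eq_left_iff_dvd.mp ((Nat.gcd_le_left k hℓpos).antisymm hle)

section GeomSum

theorem geom_sum_range_mul {R : Type*} [Semiring R] (x : R) (a b : ℕ) :
    ∑ i ∈ range (a * b), x ^ i = (∑ i ∈ range a, x ^ i) * ∑ j ∈ range b, (x ^ a) ^ j := by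
  induction b with
  | zero => simp
  | succ b ih =>
    rw [mul_add_one, sum_range_add, ih, sum_range_succ _ b, mul_add, sum_mul (range a) _ (_ ^ b)]
    simp only [← pow_mul, ← pow_add, add_comm]

section OrderedSemiring

variable {R : Type*} [Semiring R] [PartialOrder R] [IsStrictOrderedRing R] {x : R}

theorem strictMono_geom_sum (hx : 0 < x) : StrictMono fun n ↦ ∑ i ∈ range n, x ^ i :=
  strictMono_nat_of_lt_succ fun n ↦ by
    simpa only [sum_range_succ] using lt_add_of_pos_right _ (pow_pos hx n)

theorem lt_two_of_geom_sum_le {n : ℕ} (hx : 0 < x) (h : ∑ i ∈ range n, x ^ i ≤ x) : n < 2 := by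
  refine (strictMono_geom_sum hx).lt_iff_lt.mp ?_
  calc ∑ i ∈ range n, x ^ i ≤ x := h
    _ < x + 1 := lt_add_one x
    _ = ∑ i ∈ range 2, x ^ i := geom_sum_two.symm

end OrderedSemiring

variable {q m s : ℕ}

theorem odd_geom_sum_of_odd (hm : Odd m) (q : ℕ) : Odd (∑ i ∈ range m, q ^ i) := by
  obtain ⟨j, rfl⟩ := hm
  rw [geom_sum_succ, geom_sum_range_mul, geom_sum_two, ← mul_assoc]
  exact ((Nat.even_mul_succ_self q).mul_right _).add_one

theorem eq_two_of_even_of_geom_sum_dvd_prime_mul_two (hm : Even m) (hq : 1 < q)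
    (hs : s.Prime) (h : ∑ i ∈ range m, q ^ i ∣ s * 2) : m = 2 := by
  obtain ⟨j, rfl⟩ := hm.exists_two_nsmul
  have hj : j ≠ 0 := by
    rintro rfl
    simp [hs.ne_zero] at h
  rw [smul_eq_mul, geom_sum_range_mul, geom_sum_two] at h
  rcases dvd_or_dvd_of_mul_dvd_prime_mul hs.prime h with hq2 | hj2
  · have hq1 : q + 1 ≤ 2 := Nat.le_of_dvd two_pos hq2
    lia
  · have hsum_le : ∑ i ∈ range j, (q ^ 2) ^ i ≤ q ^ 2 :=
      (Nat.le_of_dvd two_pos hj2).trans (one_lt_pow₀ hq two_ne_zero)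
    have hj_lt : j < 2 := lt_two_of_geom_sum_le (by positivity) hsum_le
    lia

theorem eq_one_or_geom_sum_eq_of_odd_of_dvd_prime_mul_two (hm : Odd m) (hq : 0 < q)
    (hs : s.Prime) (h : ∑ i ∈ range m, q ^ i ∣ s * 2) : m = 1 ∨ ∑ i ∈ range m, q ^ i = s := by
  have hdvd : ∑ i ∈ range m, q ^ i ∣ s :=
    (odd_geom_sum_of_odd hm q).coprime_two_right.dvd_of_dvd_mul_right h
  refine ((Nat.dvd_prime hs).mp hdvd).imp_left fun hone ↦ ?_
  exact (strictMono_geom_sum hq).injective (hone.trans (geom_sum_one q).symm)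

theorem eq_one_or_eq_two_or_geom_sum_eq_of_dvd_prime_mul_two (hq : 1 < q) (hs : s.Prime)
    (h : ∑ i ∈ range m, q ^ i ∣ s * 2) : m = 1 ∨ m = 2 ∨ ∑ i ∈ range m, q ^ i = s := by
  rcases m.even_or_odd with hm | hm
  · exact .inr (.inl (eq_two_of_even_of_geom_sum_dvd_prime_mul_two hm hq hs h))
  · have hq0 : 0 < q := zero_lt_one.trans hq
    exact (eq_one_or_geom_sum_eq_of_odd_of_dvd_prime_mul_two hm hq0 hs h).imp_right .inr

theorem geom_sum_dvd_of_mul_eq_pow_sub_one {c e : ℕ} (he : 0 < e) (heq : c * e = q ^ m - 1)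
    (hdvd : e ∣ q - 1) (hq : 0 < q) : ∑ i ∈ range m, q ^ i ∣ c := by
  refine Nat.dvd_of_mul_dvd_mul_right he ?_
  rw [heq, ← geom_sum_mul_of_one_le hq m]
  exact Nat.mul_dvd_mul_left _ hdvd

end GeomSum

theorem order_dichotomy_general {p k ℓ e d s : ℕ} (he : 0 < e) (hd : d ∣ 2) (hs : s.Prime)
    (heq : d * s * e = p ^ k - 1) (hℓk : ℓ ∣ k) (heℓ : e ∣ p ^ ℓ - 1) :
    k = ℓ ∨ k = 2 * ℓ ∨ (p ^ k - 1) / (p ^ ℓ - 1) = s := by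
  obtain ⟨m, rfl⟩ := hℓk
  rw [pow_mul] at heq ⊢
  have hq : 1 < p ^ ℓ := by
    have hd0 : 0 < d := Nat.pos_of_dvd_of_pos hd two_pos
    have hpow : 0 < (p ^ ℓ) ^ m - 1 := heq ▸ Nat.mul_pos (Nat.mul_pos hd0 hs.pos) he
    exact lt_of_pow_lt_pow_left₀ m (Nat.zero_le _) (by lia)
  have hsum : ∑ i ∈ range m, (p ^ ℓ) ^ i ∣ s * 2 :=
    (geom_sum_dvd_of_mul_eq_pow_sub_one he heq heℓ (zero_lt_one.trans hq)).trans
      (mul_comm d s ▸ Nat.mul_dvd_mul_left s hd)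
  rw [← Nat.geomSum_eq hq]
  rcases eq_one_or_eq_two_or_geom_sum_eq_of_dvd_prime_mul_two hq hs hsum with rfl | rfl | hs_eq
  · exact .inl (mul_one ℓ)
  · exact .inr (.inl (mul_comm ℓ 2))
  · exact .inr (.inr hs_eq)

/-- Let `p` be a prime, `k, ℓ, e` positive integers, `d ∈ {1, 2}`, and `s` a prime
with `d·s·e = p^k - 1`.  If `ℓ = min {i ≥ 1 : e ∣ p^i - 1}` is the multiplicative
order of `p` modulo `e`, then `k = ℓ`, or `k = 2ℓ`, or `(p^k - 1)/(p^ℓ - 1) = s`. -/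
theorem order_dichotomy
    (p : ℕ) (hp : p.Prime) (k ℓ e : ℕ) (hk : 0 < k) (hℓpos : 0 < ℓ) (he : 0 < e)
    (d : ℕ) (hd : d = 1 ∨ d = 2) (s : ℕ) (hs : s.Prime)
    (heq : d * s * e = p ^ k - 1)
    (hord : ℓ = sInf {i : ℕ | 1 ≤ i ∧ e ∣ p ^ i - 1}) :
    k = ℓ ∨ k = 2 * ℓ ∨ (p ^ k - 1) / (p ^ ℓ - 1) = s := by
  have hek : e ∣ p ^ k - 1 := heq ▸ dvd_mul_left e (d * s)
  have hℓ : IsLeast {i : ℕ | 1 ≤ i ∧ e ∣ p ^ i - 1} ℓ := hord ▸ isLeast_csInf ⟨k, hk, hek⟩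
  exact order_dichotomy_general he ((Nat.dvd_prime Nat.prime_two).mpr hd) hs heq
    (dvd_of_isLeast_dvd_pow_sub_one hℓ hek) hℓ.1.2
end

section
/- Let F be a finite field, let R be a finite-dimensional algebra over F, and let M be an R-module of finite dimension over F. Let J be the Jacobson radical of R (the intersection of all maximal left ideals of R), and let JM denote the submodule of M generated by all elements j·m with j ∈ J, m ∈ M. Then the number of maximal R-submodules of M is at most |M/JM| − 1. -/
/-!
Maximal submodules of `M` contain `JM`, so they correspond to maximal submodules of `M/JM`, and
it suffices to bound their number by `|M| - 1` for finite `M`. Distinct maximal submodules have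
sum `M`, so no nontrivial complex character of the additive group `M` is trivial on two of them.
Choosing for each maximal submodule a nontrivial character that is trivial on it is therefore
injective, and `M` has exactly `|M| - 1` nontrivial characters.
-/

open Function

section Characters

variable {ι A : Type*} [AddCommGroup A]

theorem exists_addChar_ne_zero_of_ne_top {H : AddSubgroup A} [Finite (A ⧸ H)] (hH : H ≠ ⊤) :
    ∃ χ : AddChar A ℂ, χ ≠ 0 ∧ ∀ a ∈ H, χ a = 1 := by
  obtain ⟨a, ha⟩ : ∃ a, a ∉ H := by
    simpa [AddSubgroup.eq_top_iff'] using hH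
  obtain ⟨ψ, hψ⟩ : ∃ ψ : AddChar (A ⧸ H) ℂ, ψ a ≠ 1 :=
    AddChar.exists_apply_ne_zero.2 fun h => ha ((QuotientAddGroup.eq_zero_iff a).1 h)
  refine ⟨ψ.compAddMonoidHom (QuotientAddGroup.mk' H), AddChar.ne_zero_iff.2 ⟨a, hψ⟩,
    fun b hb => ?_⟩
  simp [(QuotientAddGroup.eq_zero_iff b).2 hb]

theorem addChar_eq_zero_of_codisjoint {B : Type*} [Monoid B] {H K : AddSubgroup A}
    (hHK : Codisjoint H K) {χ : AddChar A B} (hH : ∀ a ∈ H, χ a = 1) (hK : ∀ a ∈ K, χ a = 1) :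
    χ = 0 := by
  ext a
  obtain ⟨h, hh, k, hk, rfl⟩ := AddSubgroup.mem_sup.1 (hHK.eq_top ▸ AddSubgroup.mem_top a)
  simp [AddChar.map_add_eq_mul, hH h hh, hK k hk]

theorem card_lt_card_of_pairwise_codisjoint [Finite A] {H : ι → AddSubgroup A}
    (hproper : ∀ i, H i ≠ ⊤) (hcodisjoint : Pairwise (Codisjoint on H)) :
    Nat.card ι < Nat.card A := by
  choose χ hχ hχH using fun i => exists_addChar_ne_zero_of_ne_top (hproper i)
  have χ_injective : Injective χ := fun i j hij => by_contra fun hne =>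
    hχ i (addChar_eq_zero_of_codisjoint (hcodisjoint hne) (hχH i) (hij ▸ hχH j))
  have zero_notMem_range : (0 : AddChar A ℂ) ∉ Set.range χ := fun ⟨i, hi⟩ => hχ i hi
  have card_dual : Nat.card (AddChar A ℂ) = Nat.card A := by
    have := Fintype.ofFinite A
    simp only [Nat.card_eq_fintype_card, AddChar.card_eq]
  calc Nat.card ι = (Set.range χ).ncard := (Set.ncard_range_of_injective χ_injective).symm
    _ < Nat.card (AddChar A ℂ) := Set.ncard_lt_card fun h => zero_notMem_range (h ▸ Set.mem_univ 0)
    _ = Nat.card A := card_dual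

end Characters

section MaximalSubmodules

variable (R M : Type*) [Ring R] [AddCommGroup M] [Module R M]

theorem ncard_isCoatom_lt_card [Finite M] :
    {N : Submodule R M | IsCoatom N}.ncard < Nat.card M := by
  refine card_lt_card_of_pairwise_codisjoint
    (H := fun N : {N : Submodule R M | IsCoatom N} => N.1.toAddSubgroup)
    (fun N h => N.2.1 (Submodule.toAddSubgroup_injective h)) fun N N' hne => ?_
  have sup_eq_top := N.2.sup_eq_top_of_ne N'.2 (Subtype.coe_ne_coe.2 hne)
  exact codisjoint_iff.2 <| by
    rw [← Submodule.sup_toAddSubgroup, sup_eq_top, Submodule.top_toAddSubgroup]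

theorem span_jacobson_smul_le_jacobson :
    Submodule.span R {x : M | ∃ j ∈ sInf {I : Ideal R | IsCoatom I}, ∃ m : M, x = j • m} ≤
      Module.jacobson R M := by
  rw [Submodule.span_le]
  rintro _ ⟨j, hj, m, rfl⟩
  exact Ring.jacobson_smul_top_le R M (Submodule.smul_mem_smul hj Submodule.mem_top)

variable {R M}

theorem ncard_isCoatom_quotient_of_le_jacobson {P : Submodule R M} (hP : P ≤ Module.jacobson R M) :
    {N : Submodule R (M ⧸ P) | IsCoatom N}.ncard = {N : Submodule R M | IsCoatom N}.ncard := by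
  have image_comap : Submodule.comap P.mkQ '' {N | IsCoatom N} = {N | IsCoatom N} := by
    refine Set.Subset.antisymm ?_ fun N hN => ?_
    · rintro _ ⟨N, hN, rfl⟩
      exact (Submodule.isCoatom_comap_iff P.mkQ_surjective).2 hN
    · have ker_le : LinearMap.ker P.mkQ ≤ N := P.ker_mkQ.trans_le (hP.trans (sInf_le hN))
      exact ⟨N.map P.mkQ, Submodule.isCoatom_map_of_ker_le P.mkQ_surjective ker_le hN,
        Submodule.comap_map_eq_self ker_le⟩
  rw [← image_comap,
    Set.ncard_image_of_injective _ (Submodule.comap_injective_of_surjective P.mkQ_surjective)]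

end MaximalSubmodules

theorem count_maximal_submodules_general
    (R M : Type*) [Ring R] [AddCommGroup M] [Module R M]
    [Finite (M ⧸ Submodule.span R
      {x : M | ∃ j ∈ sInf {I : Ideal R | IsCoatom I}, ∃ m : M, x = j • m})] :
    {N : Submodule R M | IsCoatom N}.ncard ≤
      Nat.card (M ⧸ Submodule.span R
        {x : M | ∃ j ∈ sInf {I : Ideal R | IsCoatom I}, ∃ m : M, x = j • m}) - 1 := by
  rw [← ncard_isCoatom_quotient_of_le_jacobson (span_jacobson_smul_le_jacobson R M)]
  exact Nat.le_sub_one_of_lt (ncard_isCoatom_lt_card R _)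

/-- Let `R` be a finite-dimensional algebra over a finite field `F` and let `M` be
an `R`-module of finite dimension over `F`.  Let `J` be the Jacobson radical of `R`
(the intersection of all maximal left ideals), and let `JM` be the submodule of `M`
generated by the products `j • m` with `j ∈ J`, `m ∈ M`.  Then `M` has at most
`|M/JM| - 1` maximal `R`-submodules. -/
theorem count_maximal_submodules
    (F : Type) [Field F] [Fintype F]
    (R : Type) [Ring R] [Algebra F R] [FiniteDimensional F R]
    (M : Type) [AddCommGroup M] [Module R M] [Module F M]
    [IsScalarTower F R M] [FiniteDimensional F M] :
    {N : Submodule R M | IsCoatom N}.ncard ≤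
      Nat.card (M ⧸ Submodule.span R
        {x : M | ∃ j ∈ sInf {I : Ideal R | IsCoatom I}, ∃ m : M, x = j • m}) - 1 := by
  have : Finite M := Module.finite_of_finite F
  have (P : Submodule R M) : Finite (M ⧸ P) := .of_surjective _ P.mkQ_surjective
  exact count_maximal_submodules_general R M
end

section
/- Let V be a nonzero finite-dimensional vector space over a finite field F. Inside the group of additive automorphisms of V, let ΓL(V) be the subgroup of all additive automorphisms f for which there exists a field automorphism σ of F with f(c·v) = σ(c)·f(v) for all c ∈ F, v ∈ V; let GL(V) ≤ ΓL(V) be the F-linear such automorphisms and SL(V) ≤ GL(V) those of determinant 1. Let G be a group with SL(V) ≤ G ≤ ΓL(V), and let H be any maximal subgroup of G. Then V is a cyclic F(H ∩ GL(V))-module: there exists v ∈ V such that the F-linear span of { g(v) : g ∈ H ∩ GL(V) } equals V. -/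
/-- The group operation on additive automorphisms is given by
`g h => AddEquiv.trans h g` (Mathlib's former instance `AddAut.group`, which is
now an `AddGroup` instance). -/
instance AddAut.group (A : Type*) [Add A] : Group (AddAut A) where
  mul g h := AddEquiv.trans h g
  one := AddEquiv.refl _
  inv := AddEquiv.symm
  mul_assoc _ _ _ := rfl
  one_mul _ := rfl
  mul_one _ := rfl
  inv_mul_cancel := AddEquiv.self_trans_symm

/-!
Write `H₀ = H ∩ GL(V)`. Maximality of `H` means that a subgroup `S ≥ H` either contains `SL(V)` or
satisfies `S ∩ SL(V) ≤ H`.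

If `H` stabilizes a proper nonzero subspace `W`, take for `S` the stabilizer of `W`. It does not
contain `SL(V)`, so `H` contains every transvection fixing `W` pointwise, and these are enough to
make each vector outside `W` cyclic.

If `H` acts irreducibly, then `V` is a semisimple `F H₀`-module by Clifford's argument. Suppose it
is not cyclic. Choosing `v` with `F H₀ v` maximal and a simple submodule of a complement, one finds
an `H₀`-endomorphism `f` with `f² = 0` and `f v ∉ F H₀ v`. Then `1 + f ∈ SL(V)` centralizes `H₀`
but is not in `H`, so the normalizer of the centralizer of `H₀`, which contains `H`, contains
`SL(V)`. Hence `H₀` commutes with all `SL(V)`-conjugates of `1 + f`, and so consists of scalars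
because `SL(V)` is doubly transitive on lines. Now `H` is generated modulo scalars by a single
semilinear map, which after rescaling (surjectivity of the norm) fixes a nonzero vector (Galois
descent); `H` preserves its line, so `dim V = 1` and `V` is cyclic after all.
-/

open Module Submodule

section AddAut

variable {A : Type*} [Add A]

theorem addAut_apply_inv_self (f : AddAut A) (x : A) : f (f⁻¹ x) = x :=
  AddEquiv.apply_symm_apply f x

theorem addAut_inv_apply_self (f : AddAut A) (x : A) : f⁻¹ (f x) = x :=
  AddEquiv.symm_apply_apply f x

end AddAut

section SemisimpleModule

theorem orderIso_sSup_isAtom {α : Type*} [CompleteLattice α] (e : α ≃o α) :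
    e (sSup {a | IsAtom a}) = sSup {a | IsAtom a} := by
  rw [e.map_sSup_eq_sSup_symm_preimage]
  exact congrArg sSup (Set.ext e.symm.isAtom_iff)

variable {R M : Type*} [Ring R] [AddCommGroup M] [Module R M]

theorem exists_submodule_orderIso_comap (h : AddAut M)
    (hh : ∀ r : R, ∃ r' : R, ∀ x, h (r • x) = r' • h x)
    (hh' : ∀ r : R, ∃ r' : R, ∀ x, h⁻¹ (r • x) = r' • h⁻¹ x) :
    ∃ e : Submodule R M ≃o Submodule R M, ∀ W x, x ∈ e W ↔ h x ∈ W := by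
  let comap (g : AddAut M) (hg : ∀ r : R, ∃ r' : R, ∀ x, g (r • x) = r' • g x)
      (W : Submodule R M) : Submodule R M :=
    { W.toAddSubgroup.comap g.toAddMonoidHom with
      smul_mem' := fun r x hx => by
        obtain ⟨r', hr'⟩ := hg r
        change g (r • x) ∈ W
        exact hr' x ▸ W.smul_mem r' hx }
  exact
    ⟨{ toFun := comap h hh
       invFun := comap h⁻¹ hh'
       left_inv := fun W => Submodule.ext fun x =>
         show h (h⁻¹ x) ∈ W ↔ x ∈ W by rw [addAut_apply_inv_self]
       right_inv := fun W => Submodule.ext fun x =>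
         show h⁻¹ (h x) ∈ W ↔ x ∈ W by rw [addAut_inv_apply_self]
       map_rel_iff' := fun {W W'} => (h.surjective.forall (p := fun x => x ∈ W → x ∈ W')).symm },
     fun _ _ => Iff.rfl⟩

/-- Clifford's argument: the socle is preserved by every `h ∈ H`. -/
theorem isSemisimpleModule_of_semilinear_irreducible [IsArtinian R M] (H : Subgroup (AddAut M))
    (hH : ∀ h ∈ H, ∀ r : R, ∃ r' : R, ∀ x, h (r • x) = r' • h x)
    (hirr : ∀ W : Submodule R M, (∀ h ∈ H, ∀ w ∈ W, h w ∈ W) → W = ⊥ ∨ W = ⊤) :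
    IsSemisimpleModule R M := by
  refine (isSemisimpleModule_iff R M).2 (complementedLattice_of_sSup_atoms_eq_top ?_)
  have hinv : ∀ h ∈ H, ∀ w ∈ sSup {S : Submodule R M | IsAtom S},
      h w ∈ sSup {S : Submodule R M | IsAtom S} := by
    intro h hh w hw
    obtain ⟨e, he⟩ := exists_submodule_orderIso_comap h (hH h hh) (hH _ (H.inv_mem hh))
    rwa [← he, orderIso_sSup_isAtom]
  refine (hirr _ hinv).elim (fun hbot => ?_) id
  rw [hbot, eq_comm]
  refine (eq_bot_or_exists_atom_le ⊤).resolve_right ?_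
  rintro ⟨S, hS, -⟩
  exact hS.1 (le_bot_iff.1 (hbot ▸ le_sSup hS))

theorem exists_linearMap_span_singleton_of_torsionOf_le {N : Type*} [AddCommGroup N] [Module R N]
    {v : M} {u : N} (h : Ideal.torsionOf R M v ≤ Ideal.torsionOf R N u) :
    ∃ g : span R {v} →ₗ[R] N, g ⟨v, mem_span_singleton_self v⟩ = u := by
  let e := Ideal.quotTorsionOfEquivSpanSingleton R M v
  have he : e (Submodule.Quotient.mk 1) = ⟨v, mem_span_singleton_self v⟩ :=
    Subtype.ext (one_smul R v)
  refine ⟨(Ideal.torsionOf R M v).liftQ (LinearMap.toSpanSingleton R N u) h ∘ₗ e.symm, ?_⟩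
  rw [← he, LinearMap.comp_apply, LinearEquiv.coe_coe, e.symm_apply_apply]
  exact one_smul R u

theorem torsionOf_le_of_not_span_singleton_lt {v : M} {S : Submodule R M} [IsSimpleModule R S]
    {u : S} (hu : u ≠ 0) (hS : Disjoint (span R {v}) S)
    (hv : ∀ w, ¬ span R {v} < span R {w}) :
    Ideal.torsionOf R M v ≤ Ideal.torsionOf R S u := by
  intro r hrv
  by_contra hru
  rw [Ideal.mem_torsionOf_iff] at hrv hru
  obtain ⟨r', hr'⟩ := mem_span_singleton.1 <|
    (IsSimpleModule.span_singleton_eq_top R hru).ge (mem_top (x := u))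
  have huv : (u : M) ∈ span R {v + u} := by
    refine mem_span_singleton.2 ⟨r' * r, ?_⟩
    rw [mul_smul, smul_add, hrv, zero_add]
    exact congrArg Subtype.val hr'
  have hle : span R {v} ≤ span R {v + (u : M)} := (span_singleton_le_iff_mem _ _).2 <|
    (add_mem_cancel_right huv).1 (mem_span_singleton_self (v + (u : M)))
  exact hv (v + u) <| hle.lt_of_not_ge fun hge =>
    hu (Subtype.ext (disjoint_def.1 hS u (hge huv) u.2))

theorem exists_end_mul_self_eq_zero_of_span_singleton_ne_top [IsSemisimpleModule R M]
    [IsNoetherian R M] (h : ∀ v : M, span R {v} ≠ ⊤) :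
    ∃ (v : M) (f : End R M), f * f = 0 ∧ f v ∉ span R {v} := by
  obtain ⟨_, ⟨v, rfl⟩, hmax⟩ :=
    wellFounded_gt.has_min (Set.range fun v : M => span R {v}) (Set.range_nonempty _)
  obtain ⟨U, hU⟩ := exists_isCompl (span R {v})
  have hU0 : U ≠ ⊥ := fun hbot => h v (eq_top_of_isCompl_bot (hbot ▸ hU))
  obtain ⟨S, hSU, hS⟩ := (IsSemisimpleModule.eq_bot_or_exists_simple_le U).resolve_left hU0
  have hvS : Disjoint (span R {v}) S := hU.disjoint.mono_right hSU
  have := IsSimpleModule.nontrivial R S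
  obtain ⟨u, hu⟩ := exists_ne (0 : S)
  obtain ⟨g, hg⟩ := exists_linearMap_span_singleton_of_torsionOf_le <|
    torsionOf_le_of_not_span_singleton_lt hu hvS fun w => hmax _ ⟨w, rfl⟩
  let p : M →ₗ[R] S := LinearMap.ofIsCompl hU g 0
  have hpv : p v = u :=
    (LinearMap.ofIsCompl_apply_left hU ⟨v, mem_span_singleton_self v⟩).trans hg
  have hpS : ∀ s : S, p s = 0 := fun s => LinearMap.ofIsCompl_apply_right hU ⟨s, hSU s.2⟩
  refine ⟨v, S.subtype ∘ₗ p, LinearMap.ext fun x => congrArg Subtype.val (hpS (p x)), fun hv => ?_⟩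
  rw [LinearMap.comp_apply, hpv] at hv
  exact hu (Subtype.ext (disjoint_def.1 hvS u hv u.2))

end SemisimpleModule

section LinearAlgebra

variable {F V : Type*} [Field F] [AddCommGroup V] [Module F V]

theorem det_one_add_of_isNilpotent [FiniteDimensional F V] {f : End F V} (hf : IsNilpotent f) :
    LinearMap.det (1 + f) = 1 := by
  have h := LinearMap.eval_charpoly (-f) 1
  rw [hf.neg.charpoly_eq_X_pow_finrank] at h
  simpa using h.symm

theorem exists_eq_smul_of_forall_mem_span_singleton (f : End F V) (h : ∀ v, f v ∈ span F {v}) :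
    ∃ a : F, ∀ v, f v = a • v := by
  obtain ⟨a, rfl⟩ := LinearMap.exists_eq_smul_id_of_forall_notLinearIndependent (f := f) fun v hv =>
    hv.notMem_span_image (s := {0}) (x := 1) (by simp) (by simpa using h v)
  exact ⟨a, fun _ => rfl⟩

theorem exists_specialLinearGroup_mem_span_singleton {u v y z : V} (huv : u ∉ span F {v})
    (hv : v ≠ 0) (hyz : y ∉ span F {z}) (hz : z ≠ 0) :
    ∃ s : SpecialLinearGroup F V,
      y ∈ span F {s.toLinearEquiv u} ∧ z ∈ span F {s.toLinearEquiv v} := by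
  have hne : ∀ {a b : V} (ha : a ≠ 0) (hb : b ≠ 0), a ∉ span F {b} →
      Projectivization.mk F a ha ≠ Projectivization.mk F b hb := fun ha hb hab h =>
    hab (mem_span_singleton.2 ((Projectivization.mk_eq_mk_iff' F _ _ ha hb).1 h))
  have hu : u ≠ 0 := fun h => huv (h ▸ zero_mem _)
  have hy : y ≠ 0 := fun h => hyz (h ▸ zero_mem _)
  obtain ⟨s, hsu, hsv⟩ := MulAction.is_two_pretransitive_iff.1
    (Projectivization.specialLinearGroup_is_two_pretransitive F V)
    (hne hu hv huv) (hne hy hz hyz)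
  rw [Projectivization.specialLinearGroup_smul_def, Projectivization.smul_mk, eq_comm,
    Projectivization.mk_eq_mk_iff'] at hsu hsv
  exact ⟨s, mem_span_singleton.2 hsu, mem_span_singleton.2 hsv⟩

theorem notMem_span_singleton_apply_of_mul_self_eq_zero {f : End F V} (hf : f * f = 0) {v : V}
    (hv : f v ≠ 0) : v ∉ span F {f v} := by
  intro h
  obtain ⟨a, ha⟩ := mem_span_singleton.1 h
  apply hv
  rw [← ha, map_smul, show f (f v) = 0 from LinearMap.congr_fun hf v, smul_zero]

/-- Otherwise some `s ∈ SL(V)` carries the lines of `f v` and `v` to those of `z` and `h z`, and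
then `s f s⁻¹` kills `z` but not `h z`. -/
theorem apply_mem_span_singleton_of_commute_conj {f h : End F V} (hff : f * f = 0) (hf : f ≠ 0)
    (hfh : ∀ s : SpecialLinearGroup F V, Commute h (s.toLinearEquiv.conj f)) (z : V) :
    h z ∈ span F {z} := by
  by_contra hz
  obtain ⟨v, hv⟩ := DFunLike.ne_iff.1 hf
  have hz0 : z ≠ 0 := by
    rintro rfl
    exact hz (by simp)
  obtain ⟨s, hs, hs'⟩ := exists_specialLinearGroup_mem_span_singleton
    (notMem_span_singleton_apply_of_mul_self_eq_zero hff hv) hv hz hz0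
  obtain ⟨b, hb⟩ := mem_span_singleton.1 hs
  obtain ⟨a, ha⟩ := mem_span_singleton.1 hs'
  have hzero : s.toLinearEquiv.conj f z = 0 := by
    rw [← ha, map_smul, LinearEquiv.conj_apply_apply, LinearEquiv.symm_apply_apply,
      show f (f v) = 0 from LinearMap.congr_fun hff v, map_zero, smul_zero]
  have hcomm : h (s.toLinearEquiv.conj f z) = s.toLinearEquiv.conj f (h z) :=
    LinearMap.congr_fun (hfh s) z
  rw [hzero, map_zero, ← hb, map_smul, LinearEquiv.conj_apply_apply,
    LinearEquiv.symm_apply_apply, eq_comm, smul_eq_zero, LinearEquiv.map_eq_zero_iff] at hcomm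
  refine hz ?_
  rw [← hb, hcomm.resolve_right hv, zero_smul]
  exact zero_mem _

end LinearAlgebra

section FiniteField

variable (F : Type*) [Field F] [Finite F]

theorem finite_ringAut : Finite (F ≃+* F) :=
  Finite.of_injective (fun σ => (σ : F → F)) DFunLike.coe_injective

theorem isCyclic_ringAut : IsCyclic (F ≃+* F) := by
  have := finite_ringAut F
  exact isCyclic_of_injective (FixedPoints.toAlgAutMulEquiv (F ≃+* F) F).toMonoidHom
    (FixedPoints.toAlgAutMulEquiv (F ≃+* F) F).injective

variable {F}

/-- The product is the norm from `F` down to the fixed field of `σ`. -/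
theorem exists_prod_pow_apply_eq {σ : F ≃+* F} {a : F} (ha : σ a = a) :
    ∃ μ : F, ∏ i ∈ Finset.range (orderOf σ), (σ ^ i) μ = a := by
  have := finite_ringAut F
  have := Fintype.ofFinite (Subgroup.zpowers σ)
  have hfix : ∀ g : Subgroup.zpowers σ, g • a = a := fun g =>
    (Subgroup.zpowers_le (H := MulAction.stabilizer (F ≃+* F) a)).2 ha g.2
  let K := FixedPoints.subfield (Subgroup.zpowers σ) F
  obtain ⟨μ, hμ⟩ := FiniteField.norm_surjective K F ⟨a, hfix⟩
  refine ⟨μ, ?_⟩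
  calc ∏ i ∈ Finset.range (orderOf σ), (σ ^ i) μ
      = ∏ i : Fin (orderOf σ), (σ ^ (i : ℕ)) μ := Finset.prod_range _
    _ = ∏ g : F ≃ₐ[K] F, g μ := Fintype.prod_equiv
        ((finEquivZPowers (isOfFinOrder_of_finite σ)).trans
          (FixedPoints.toAlgAutMulEquiv (Subgroup.zpowers σ) F).toEquiv) _ _ fun _ => rfl
    _ = algebraMap K F (Algebra.norm K μ) := (Algebra.norm_eq_prod_automorphisms K μ).symm
    _ = a := congrArg (algebraMap K F) hμ

end FiniteField

section SemilinearGroup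

variable (F V : Type*) [Field F] [AddCommGroup V] [Module F V]

/-- The pairs `(σ, f)` for which the additive automorphism `f` of `V` is `σ`-semilinear. Carrying
`σ` along makes powers, products and inverses of semilinear maps a matter of membership. -/
def semilinearGroup : Subgroup ((F ≃+* F) × AddAut V) where
  carrier := {p | ∀ (c : F) (v : V), p.2 (c • v) = p.1 c • p.2 v}
  one_mem' _ _ := rfl
  mul_mem' {p q} hp hq c v :=
    show p.2 (q.2 (c • v)) = p.1 (q.1 c) • p.2 (q.2 v) by rw [hq, hp]
  inv_mem' {p} hp c v := p.2.injective <|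
    show p.2 (p.2⁻¹ (c • v)) = p.2 (p.1⁻¹ c • p.2⁻¹ v) by
      rw [hp, addAut_apply_inv_self, addAut_apply_inv_self]
      exact congrArg (· • v) (p.1.apply_symm_apply c).symm

/-- The group `ΓL(V)` of additive automorphisms of `V` that are semilinear over `F`. -/
def semilinearAut : Subgroup (AddAut V) :=
  (semilinearGroup F V).map (MonoidHom.snd _ _)

/-- The group `GL(V)` of `F`-linear automorphisms, inside the additive automorphisms of `V`. -/
def linearAut : Subgroup (AddAut V) :=
  (semilinearGroup F V).comap (MonoidHom.inr _ _)

/-- The group `SL(V)`, inside the additive automorphisms of `V`. For infinite-dimensional `V` it is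
all of `GL(V)`, since determinants are then `1` by convention. -/
def specialLinearAut : Subgroup (AddAut V) :=
  MonoidHom.range
    { toFun := fun s : SpecialLinearGroup F V => s.toLinearEquiv.toAddEquiv
      map_one' := rfl
      map_mul' := fun _ _ => rfl }

variable {F V}

theorem mem_semilinearAut {f : AddAut V} :
    f ∈ semilinearAut F V ↔ ∃ σ : F ≃+* F, ∀ (c : F) (v : V), f (c • v) = σ c • f v :=
  ⟨by rintro ⟨⟨σ, _⟩, h, rfl⟩; exact ⟨σ, h⟩, fun ⟨σ, h⟩ => ⟨(σ, f), h, rfl⟩⟩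

theorem exists_end_of_mem_linearAut {f : AddAut V} (hf : f ∈ linearAut F V) :
    ∃ T : End F V, ∀ x, T x = f x :=
  ⟨{ f with map_smul' := hf }, fun _ => rfl⟩

theorem specialLinearAut_le_linearAut : specialLinearAut F V ≤ linearAut F V := by
  rintro _ ⟨s, rfl⟩
  exact map_smul s.toLinearEquiv

theorem exists_mem_specialLinearAut [FiniteDimensional F V] {f : End F V}
    (hf : LinearMap.det f = 1) : ∃ g ∈ specialLinearAut F V, ∀ x, g x = f x :=
  ⟨_, ⟨⟨LinearMap.equivOfDetNeZero f (hf ▸ one_ne_zero), Units.ext <| by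
    rw [LinearEquiv.coe_det]; exact hf⟩, rfl⟩, fun _ => rfl⟩

theorem exists_transvection_mem_specialLinearAut [FiniteDimensional F V] {l : Dual F V} {y : V}
    (hy : l y = 0) : ∃ t ∈ specialLinearAut F V, ∀ x, t x = x + l x • y :=
  exists_mem_specialLinearAut (f := LinearMap.transvection l y)
    (by rw [LinearMap.transvection.det, hy, add_zero])

theorem semilinearAut_le_normalizer_linearAut :
    semilinearAut F V ≤ Subgroup.normalizer (linearAut F V : Set (AddAut V)) := by
  rw [Subgroup.le_normalizer_iff]
  rintro _ ⟨⟨σ, g⟩, hg, rfl⟩ f hf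
  have h := mul_mem (mul_mem hg (show (1, f) ∈ semilinearGroup F V from hf)) (inv_mem hg)
  rw [Prod.inv_mk, Prod.mk_mul_mk, Prod.mk_mul_mk, mul_one, mul_inv_cancel] at h
  exact h

end SemilinearGroup

section SemilinearFixedVector

variable {F V : Type*} [Field F] [AddCommGroup V] [Module F V]

theorem pow_apply_smul_of_mem_semilinearGroup {σ : F ≃+* F} {φ : AddAut V}
    (hφ : (σ, φ) ∈ semilinearGroup F V) (n : ℕ) (c : F) (v : V) :
    (φ ^ n) (c • v) = (σ ^ n) c • (φ ^ n) v :=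
  pow_mem hφ n c v

theorem pow_apply_eq_prod_smul {σ : F ≃+* F} {φ ψ : AddAut V} (hφ : (σ, φ) ∈ semilinearGroup F V)
    {μ : F} (hφψ : ∀ v, φ v = μ • ψ v) (n : ℕ) (v : V) :
    (φ ^ n) v = (∏ i ∈ Finset.range n, (σ ^ i) μ) • (ψ ^ n) v := by
  induction n with
  | zero => exact (one_smul F v).symm
  | succ n ih =>
    calc (φ ^ (n + 1)) v = φ ((φ ^ n) v) := by rw [pow_succ']; rfl
      _ = σ (∏ i ∈ Finset.range n, (σ ^ i) μ) • φ ((ψ ^ n) v) := by rw [ih, hφ]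
      _ = ((∏ i ∈ Finset.range n, (σ ^ (i + 1)) μ) * μ) • ψ ((ψ ^ n) v) := by
        rw [hφψ, smul_smul, map_prod]
        simp only [pow_succ', RingAut.mul_apply]
      _ = (∏ i ∈ Finset.range (n + 1), (σ ^ i) μ) • (ψ ^ (n + 1)) v := by
        rw [Finset.prod_range_succ', pow_zero, pow_succ' ψ]; rfl

/-- By Dedekind's independence of characters, applied to the powers of `σ`. -/
theorem exists_sum_pow_apply_ne_zero [Nontrivial V] {σ : F ≃+* F} {ψ : AddAut V}
    (hψ : (σ, ψ) ∈ semilinearGroup F V) (hσ : IsOfFinOrder σ) :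
    ∃ v, ∑ i ∈ Finset.range (orderOf σ), (ψ ^ i) v ≠ 0 := by
  by_contra! hzero
  obtain ⟨v, hv⟩ := exists_ne (0 : V)
  refine hv ((forall_dual_apply_eq_zero_iff F v).1 fun l => ?_)
  have hinj : Function.Injective fun i : Fin (orderOf σ) =>
      (((σ ^ (i : ℕ) : F ≃+* F) : F →+* F) : F →* F) := fun i j hij =>
    Fin.ext <| pow_injOn_Iio_orderOf i.2 j.2 <| RingEquiv.ext fun x => DFunLike.congr_fun hij x
  have hindep := Fintype.linearIndependent_iff.1 ((linearIndependent_monoidHom F F).comp _ hinj)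
  refine hindep (fun i => l ((ψ ^ (i : ℕ)) v)) (funext fun c => ?_) ⟨0, hσ.orderOf_pos⟩
  have hc := congrArg l (hzero (c • v))
  rw [map_zero, map_sum, Finset.sum_range] at hc
  simpa [pow_apply_smul_of_mem_semilinearGroup hψ, mul_comm] using hc

theorem exists_ne_zero_apply_eq_self [Nontrivial V] {σ : F ≃+* F} {ψ : AddAut V}
    (hψ : (σ, ψ) ∈ semilinearGroup F V) (hσ : IsOfFinOrder σ) (hψ1 : ψ ^ orderOf σ = 1) :
    ∃ w ≠ 0, ψ w = w := by
  obtain ⟨v, hv⟩ := exists_sum_pow_apply_ne_zero hψ hσ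
  refine ⟨_, hv, ?_⟩
  have htele : ∑ i ∈ Finset.range (orderOf σ), ((ψ ^ (i + 1)) v - (ψ ^ i) v) = 0 := by
    rw [Finset.sum_range_sub fun i => (ψ ^ i) v, hψ1, pow_zero, sub_self]
  rw [map_sum, ← sub_eq_zero, ← Finset.sum_sub_distrib, ← htele]
  simp only [pow_succ']
  rfl

theorem exists_ne_zero_apply_mem_span_singleton [Finite F] [Nontrivial V] {σ : F ≃+* F}
    {φ : AddAut V} (hφ : (σ, φ) ∈ semilinearGroup F V) {a : F}
    (ha : ∀ v, (φ ^ orderOf σ) v = a • v) : ∃ w ≠ 0, φ w ∈ span F {w} := by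
  have := finite_ringAut F
  obtain ⟨v, hv⟩ := exists_ne (0 : V)
  have hφv : φ v ≠ 0 := (map_ne_zero_iff φ φ.injective).2 hv
  have hσa : σ a = a := smul_left_injective F hφv <|
    calc σ a • φ v = φ ((φ ^ orderOf σ) v) := by rw [ha, hφ]
      _ = (φ ^ orderOf σ) (φ v) := DFunLike.congr_fun (Commute.self_pow φ (orderOf σ)).eq v
      _ = a • φ v := ha _
  have ha0 : a ≠ 0 := by
    rintro rfl
    exact (map_ne_zero_iff (φ ^ orderOf σ) (AddEquiv.injective _)).2 hv (by rw [ha, zero_smul])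
  obtain ⟨μ, hμ⟩ := exists_prod_pow_apply_eq hσa
  have hμ0 : μ ≠ 0 := by
    rintro rfl
    exact ha0 (hμ ▸ Finset.prod_eq_zero (Finset.mem_range.2 (orderOf_pos σ)) (map_zero _))
  let m : AddAut V := DistribMulAction.toAddEquiv V (Units.mk0 μ hμ0)
  have hφψ : ∀ x, φ x = μ • (m⁻¹ * φ) x := fun x => (addAut_apply_inv_self m (φ x)).symm
  have hmlin : (1, m) ∈ semilinearGroup F V := fun c x => smul_comm μ c x
  have hψ : (σ, m⁻¹ * φ) ∈ semilinearGroup F V := by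
    simpa using mul_mem (inv_mem hmlin) hφ
  obtain ⟨w, hw0, hw⟩ := exists_ne_zero_apply_eq_self hψ (isOfFinOrder_of_finite σ) <|
    AddEquiv.ext fun x => smul_right_injective V ha0 <| by
      change a • _ = a • x
      rw [← hμ, ← pow_apply_eq_prod_smul hφ hφψ, ha, hμ]
  exact ⟨w, hw0, by rw [hφψ, hw]; exact smul_mem _ _ (mem_span_singleton_self w)⟩

theorem pow_apply_mem_of_forall_apply_mem {W : Submodule F V} {φ : AddAut V}
    (h : ∀ x ∈ W, φ x ∈ W) (n : ℕ) : ∀ x ∈ W, (φ ^ n) x ∈ W := by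
  rw [hom_coe_pow (fun f : AddAut V => (f : V → V)) rfl (fun _ _ => rfl) φ n]
  exact Set.MapsTo.iterate h n

theorem exists_forall_eq_pow_mul_of_le_semilinearAut [Finite F] {H : Subgroup (AddAut V)}
    (hH : H ≤ semilinearAut F V) :
    ∃ p ∈ semilinearGroup F V, p.2 ∈ H ∧
      ∀ h ∈ H, ∃ n : ℕ, ∃ g ∈ H ⊓ linearAut F V, h = p.2 ^ n * g := by
  have := finite_ringAut F
  have := isCyclic_ringAut F
  let P : Subgroup ((F ≃+* F) × AddAut V) :=
    semilinearGroup F V ⊓ H.comap (MonoidHom.snd _ _)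
  obtain ⟨⟨_, p, ⟨hp, hpH⟩, rfl⟩, hgen⟩ :=
    IsCyclic.exists_generator (α := P.map (MonoidHom.fst _ _))
  refine ⟨p, hp, hpH, fun h hh => ?_⟩
  obtain ⟨q, hq, rfl⟩ := hH hh
  obtain ⟨n, hn⟩ := mem_powers_iff_mem_zpowers.2 (hgen ⟨q.1, q, ⟨hq, hh⟩, rfl⟩)
  have hn : p.1 ^ n = q.1 := congrArg Subtype.val hn
  refine ⟨n, (p.2 ^ n)⁻¹ * q.2, ⟨H.mul_mem (H.inv_mem (H.pow_mem hpH n)) hh, ?_⟩,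
    (mul_inv_cancel_left _ _).symm⟩
  have hlin : (p ^ n)⁻¹ * q = (1, (p.2 ^ n)⁻¹ * q.2) :=
    Prod.ext (show (p.1 ^ n)⁻¹ * q.1 = 1 by rw [hn, inv_mul_cancel]) rfl
  exact show (1, _) ∈ semilinearGroup F V from hlin ▸ mul_mem (inv_mem (pow_mem hp n)) hq

theorem exists_ne_zero_forall_apply_mem_span_singleton [Finite F] [Nontrivial V]
    {H : Subgroup (AddAut V)} (hH : H ≤ semilinearAut F V)
    (hscalar : ∀ h ∈ H ⊓ linearAut F V, ∀ v, h v ∈ span F {v}) :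
    ∃ w : V, w ≠ 0 ∧ ∀ h ∈ H, h w ∈ span F {w} := by
  obtain ⟨⟨σ, φ⟩, hφ, hφH, hgen⟩ := exists_forall_eq_pow_mul_of_le_semilinearAut hH
  have hk : φ ^ orderOf σ ∈ H ⊓ linearAut F V := by
    refine ⟨pow_mem hφH _, fun c v => ?_⟩
    simpa using pow_apply_smul_of_mem_semilinearGroup hφ (orderOf σ) c v
  obtain ⟨T, hT⟩ := exists_end_of_mem_linearAut hk.2
  obtain ⟨a, ha⟩ := exists_eq_smul_of_forall_mem_span_singleton T fun v => hT v ▸ hscalar _ hk v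
  obtain ⟨w, hw0, hw⟩ := exists_ne_zero_apply_mem_span_singleton hφ fun v =>
    (hT v).symm.trans (ha v)
  have hline : ∀ x ∈ span F {w}, φ x ∈ span F {w} := fun x hx => by
    obtain ⟨c, rfl⟩ := mem_span_singleton.1 hx
    rw [hφ]
    exact smul_mem _ _ hw
  refine ⟨w, hw0, fun h hh => ?_⟩
  obtain ⟨n, g, hg, rfl⟩ := hgen h hh
  exact pow_apply_mem_of_forall_apply_mem hline n _ (hscalar g hg w)

end SemilinearFixedVector

section Group

variable {A : Type*} [Group A]

theorem normalizer_le_normalizer_centralizer (K : Subgroup A) :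
    Subgroup.normalizer (K : Set A) ≤
      Subgroup.normalizer (Subgroup.centralizer (K : Set A) : Set A) := by
  rw [Subgroup.le_normalizer_iff]
  intro h hh c hc
  rw [Subgroup.mem_centralizer_iff] at hc ⊢
  intro k hk
  have hk' := hc _ ((Subgroup.mem_normalizer_iff''.1 hh k).1 hk)
  calc k * (h * c * h⁻¹) = h * (h⁻¹ * k * h * c) * h⁻¹ := by group
    _ = h * (c * (h⁻¹ * k * h)) * h⁻¹ := by rw [hk']
    _ = h * c * h⁻¹ * k := by group

theorem le_or_inf_le_of_isCoatom_subgroupOf {G H N S : Subgroup A} (hH : IsCoatom (H.subgroupOf G))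
    (hN : N ≤ G) (hS : H ≤ S) : N ≤ S ∨ S ⊓ N ≤ H := by
  refine (hH.le_iff.1 (Subgroup.comap_mono (f := G.subtype) hS)).imp (fun h x hx => ?_)
    fun h x hx => ?_
  · exact h.ge (Subgroup.mem_top ⟨x, hN hx⟩)
  · exact h.le (show (⟨x, hN hx.2⟩ : G) ∈ S.subgroupOf G from hx.1)

end Group

section LinearOrbitSpan

variable {F V : Type*} [Field F] [AddCommGroup V] [Module F V] {H : Subgroup (AddAut V)}

variable (F H) in
/-- The `F`-span of the orbit of `v` under `H ∩ GL(V)`, that is, the `F(H ∩ GL(V))`-submodule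
generated by `v`. -/
def linearOrbitSpan (v : V) : Submodule F V :=
  span F {w | ∃ f ∈ H ⊓ linearAut F V, w = f v}

theorem apply_mem_linearOrbitSpan {f : AddAut V} (hf : f ∈ H ⊓ linearAut F V) (v : V) :
    f v ∈ linearOrbitSpan F H v :=
  subset_span ⟨f, hf, rfl⟩

theorem mem_linearOrbitSpan_self (v : V) : v ∈ linearOrbitSpan F H v :=
  apply_mem_linearOrbitSpan (one_mem (H ⊓ linearAut F V)) v

theorem apply_mem_linearOrbitSpan_of_mem {f : AddAut V} (hf : f ∈ H ⊓ linearAut F V) {v w : V}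
    (hw : w ∈ linearOrbitSpan F H v) : f w ∈ linearOrbitSpan F H v := by
  obtain ⟨T, hT⟩ := exists_end_of_mem_linearAut hf.2
  have hle : linearOrbitSpan F H v ≤ (linearOrbitSpan F H v).comap T := by
    refine span_le.2 ?_
    rintro _ ⟨g, hg, rfl⟩
    rw [SetLike.mem_coe, mem_comap, hT]
    exact apply_mem_linearOrbitSpan (mul_mem hf hg) v
  exact hT w ▸ hle hw

end LinearOrbitSpan

section Reducible

variable {F V : Type*} [Field F] [AddCommGroup V] [Module F V] {H : Subgroup (AddAut V)}
  {W : Submodule F V}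

/-- The setwise stabilizer of the subspace `W` among the additive automorphisms of `V`. -/
def submoduleStabilizer (W : Submodule F V) : Subgroup (AddAut V) where
  carrier := {f | ∀ x, f x ∈ W ↔ x ∈ W}
  one_mem' _ := Iff.rfl
  mul_mem' {_ g} hf hg x := (hf (g x)).trans (hg x)
  inv_mem' {f} hf x := by rw [← hf, addAut_apply_inv_self]

theorem le_submoduleStabilizer (hW : ∀ h ∈ H, ∀ w ∈ W, h w ∈ W) : H ≤ submoduleStabilizer W :=
  fun h hh x => ⟨fun hx => addAut_inv_apply_self h x ▸ hW _ (inv_mem hh) _ hx, hW h hh x⟩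

theorem mem_submoduleStabilizer_of_transvection {l : Dual F V} {y : V} (hl : W ≤ LinearMap.ker l)
    (hy : l y = 0) {t : AddAut V} (ht : ∀ x, t x = x + l x • y) : t ∈ submoduleStabilizer W := by
  have hfix : ∀ x, l x = 0 → t x = x := fun x hx => by rw [ht, hx, zero_smul, add_zero]
  refine fun x => ⟨fun hx => ?_, fun hx => (hfix x (hl hx)).symm ▸ hx⟩
  have hltx : l (t x) = l x := by rw [ht, map_add, map_smul, hy, smul_zero, add_zero]
  exact hfix x (hltx ▸ hl hx) ▸ hx

theorem not_specialLinearAut_le_submoduleStabilizer [FiniteDimensional F V] (hbot : W ≠ ⊥)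
    (htop : W ≠ ⊤) : ¬ specialLinearAut F V ≤ submoduleStabilizer W := by
  intro hle
  obtain ⟨w, hw, hw0⟩ := W.exists_mem_ne_zero_of_ne_bot hbot
  obtain ⟨v, -, hv⟩ := SetLike.exists_of_lt htop.lt_top
  have hwv : w ∉ span F {v} := fun h => by
    obtain ⟨c, rfl⟩ := mem_span_singleton.1 h
    exact hv ((W.smul_mem_iff (left_ne_zero_of_smul hw0)).1 hw)
  obtain ⟨l, hlw, hlv⟩ := exists_le_ker_of_notMem hwv
  obtain ⟨t, ht, htx⟩ :=
    exists_transvection_mem_specialLinearAut (hlv (mem_span_singleton_self v))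
  have htw : w + l w • v ∈ W := htx w ▸ (hle ht w).2 hw
  exact hv ((W.smul_mem_iff hlw).1 ((W.add_mem_iff_right hw).1 htw))

theorem mem_linearOrbitSpan_of_notMem_sup [FiniteDimensional F V]
    (hSL : submoduleStabilizer W ⊓ specialLinearAut F V ≤ H) {v y : V}
    (hv : v ∉ W ⊔ span F {y}) : y ∈ linearOrbitSpan F H v := by
  obtain ⟨l, hlv, hl⟩ := exists_le_ker_of_notMem hv
  have hy : l y = 0 := hl (mem_sup_right (mem_span_singleton_self y))
  obtain ⟨t, ht, htx⟩ := exists_transvection_mem_specialLinearAut hy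
  have htW := mem_submoduleStabilizer_of_transvection (le_sup_left.trans hl) hy htx
  have htv : v + l v • y ∈ linearOrbitSpan F H v := htx v ▸
    apply_mem_linearOrbitSpan ⟨hSL ⟨htW, ht⟩, specialLinearAut_le_linearAut ht⟩ v
  exact (smul_mem_iff _ hlv).1 ((Submodule.add_mem_iff_right _ (mem_linearOrbitSpan_self v)).1 htv)

theorem linearOrbitSpan_eq_top_of_notMem [FiniteDimensional F V]
    (hSL : submoduleStabilizer W ⊓ specialLinearAut F V ≤ H) {v : V} (hv : v ∉ W) :
    linearOrbitSpan F H v = ⊤ := by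
  have hW : W ≤ linearOrbitSpan F H v := fun y hy => mem_linearOrbitSpan_of_notMem_sup hSL <| by
    rwa [sup_eq_left.2 ((span_singleton_le_iff_mem y W).2 hy)]
  refine eq_top_iff'.2 fun y => ?_
  by_cases hy : v ∈ W ⊔ span F {y}
  · obtain ⟨w, hw, _, hcy, hwcy⟩ := mem_sup.1 hy
    obtain ⟨c, rfl⟩ := mem_span_singleton.1 hcy
    have hc : c ≠ 0 := by
      rintro rfl
      exact hv (by rwa [← hwcy, zero_smul, add_zero])
    have hsum : w + c • y ∈ linearOrbitSpan F H v := hwcy.symm ▸ mem_linearOrbitSpan_self v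
    exact (smul_mem_iff _ hc).1 ((Submodule.add_mem_iff_right _ (hW hw)).1 hsum)
  · exact mem_linearOrbitSpan_of_notMem_sup hSL hy

end Reducible

section Irreducible

variable {F V : Type*} [Field F] [AddCommGroup V] [Module F V] {H : Subgroup (AddAut V)}

variable (F H) in
/-- The image of the group algebra `F(H ∩ GL(V))` in the endomorphism algebra of `V`. -/
def envelopingAlgebra : Subalgebra F (End F V) :=
  Algebra.adjoin F {T | ∃ f ∈ H ⊓ linearAut F V, ∀ x, T x = f x}

theorem apply_mem_linearOrbitSpan_of_mem_envelopingAlgebra {T : End F V}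
    (hT : T ∈ envelopingAlgebra F H) {v : V} :
    ∀ w ∈ linearOrbitSpan F H v, T w ∈ linearOrbitSpan F H v := by
  induction hT using Algebra.adjoin_induction with
  | mem T hT =>
    obtain ⟨f, hf, hTf⟩ := hT
    exact fun w hw => hTf w ▸ apply_mem_linearOrbitSpan_of_mem hf hw
  | algebraMap c => exact fun w hw => smul_mem _ c hw
  | add S T _ _ hS hT => exact fun w hw => add_mem (hS w hw) (hT w hw)
  | mul _ T _ _ hS hT => exact fun w hw => hS _ (hT w hw)

theorem exists_envelopingAlgebra_smul_eq {f : AddAut V} (hf : f ∈ H ⊓ linearAut F V) :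
    ∃ T : envelopingAlgebra F H, ∀ x, f x = T • x := by
  obtain ⟨T, hT⟩ := exists_end_of_mem_linearAut hf.2
  exact ⟨⟨T, Algebra.subset_adjoin ⟨f, hf, hT⟩⟩, fun x => (hT x).symm⟩

theorem linearOrbitSpan_eq_restrictScalars_span (v : V) :
    linearOrbitSpan F H v = (span (envelopingAlgebra F H) {v}).restrictScalars F := by
  refine le_antisymm (span_le.2 ?_) fun w hw => ?_
  · rintro _ ⟨f, hf, rfl⟩
    obtain ⟨T, hT⟩ := exists_envelopingAlgebra_smul_eq hf
    exact mem_span_singleton.2 ⟨T, (hT v).symm⟩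
  · obtain ⟨T, rfl⟩ := mem_span_singleton.1 hw
    exact apply_mem_linearOrbitSpan_of_mem_envelopingAlgebra T.2 v (mem_linearOrbitSpan_self v)

theorem le_normalizer_inf_linearAut (hH : H ≤ semilinearAut F V) :
    H ≤ Subgroup.normalizer ((H ⊓ linearAut F V : Subgroup (AddAut V)) : Set (AddAut V)) :=
  (le_inf Subgroup.le_normalizer (hH.trans semilinearAut_le_normalizer_linearAut)).trans
    Subgroup.inf_normalizer_le_normalizer_inf

theorem exists_envelopingAlgebra_apply_smul_eq (hH : H ≤ semilinearAut F V) {h : AddAut V}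
    (hh : h ∈ H) (T : envelopingAlgebra F H) :
    ∃ T' : envelopingAlgebra F H, ∀ x, h (T • x) = T' • h x := by
  obtain ⟨T, hT⟩ := T
  induction hT using Algebra.adjoin_induction with
  | mem T hT =>
    obtain ⟨f, hf, hTf⟩ := hT
    obtain ⟨T', hT'⟩ := exists_envelopingAlgebra_smul_eq
      ((Subgroup.mem_normalizer_iff.1 (le_normalizer_inf_linearAut hH hh) f).1 hf)
    refine ⟨T', fun x => ?_⟩
    rw [← hT' (h x)]
    change h (T x) = h (f (h⁻¹ (h x)))
    rw [hTf, addAut_inv_apply_self]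
  | algebraMap c =>
    obtain ⟨σ, hσ⟩ := mem_semilinearAut.1 (hH hh)
    exact ⟨algebraMap F _ (σ c), hσ c⟩
  | add S T _ _ hS hT =>
    obtain ⟨S', hS'⟩ := hS
    obtain ⟨T', hT'⟩ := hT
    refine ⟨S' + T', fun x => ?_⟩
    rw [add_smul, ← hS', ← hT', ← map_add]
    rfl
  | mul S T _ _ hS hT =>
    obtain ⟨S', hS'⟩ := hS
    obtain ⟨T', hT'⟩ := hT
    refine ⟨S' * T', fun x => ?_⟩
    rw [mul_smul, ← hT', ← hS']
    rfl

theorem isSemisimpleModule_envelopingAlgebra [FiniteDimensional F V] (hH : H ≤ semilinearAut F V)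
    (hirr : ∀ W : Submodule F V, (∀ h ∈ H, ∀ w ∈ W, h w ∈ W) → W = ⊥ ∨ W = ⊤) :
    IsSemisimpleModule (envelopingAlgebra F H) V := by
  have : IsArtinian (envelopingAlgebra F H) V := isArtinian_of_tower F inferInstance
  refine isSemisimpleModule_of_semilinear_irreducible H
    (fun h hh => exists_envelopingAlgebra_apply_smul_eq hH hh) fun W hW => ?_
  exact (hirr (W.restrictScalars F) hW).imp (restrictScalars_eq_bot_iff F _ V).1
    (restrictScalars_eq_top_iff F _ V).1

theorem exists_end_mul_self_eq_zero_of_linearOrbitSpan_ne_top [FiniteDimensional F V]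
    (hH : H ≤ semilinearAut F V)
    (hirr : ∀ W : Submodule F V, (∀ h ∈ H, ∀ w ∈ W, h w ∈ W) → W = ⊥ ∨ W = ⊤)
    (hcyc : ∀ v : V, linearOrbitSpan F H v ≠ ⊤) :
    ∃ (v : V) (f : End F V), f * f = 0 ∧ f v ∉ linearOrbitSpan F H v ∧
      ∀ g ∈ H ⊓ linearAut F V, ∀ x, f (g x) = g (f x) := by
  have := isSemisimpleModule_envelopingAlgebra hH hirr
  have : IsNoetherian (envelopingAlgebra F H) V := isNoetherian_of_tower F inferInstance
  simp only [linearOrbitSpan_eq_restrictScalars_span, restrictScalars_mem, ne_eq,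
    restrictScalars_eq_top_iff] at hcyc ⊢
  obtain ⟨v, f, hff, hfv⟩ := exists_end_mul_self_eq_zero_of_span_singleton_ne_top hcyc
  refine ⟨v, f.restrictScalars F, LinearMap.ext fun x => LinearMap.congr_fun hff x, hfv,
    fun g hg x => ?_⟩
  obtain ⟨T, hT⟩ := exists_envelopingAlgebra_smul_eq hg
  rw [hT, hT]
  exact f.map_smul T x

theorem exists_mem_centralizer_of_end_mul_self_eq_zero [FiniteDimensional F V]
    {K : Subgroup (AddAut V)} {f : End F V} (hf : f * f = 0)
    (hfK : ∀ g ∈ K, ∀ x, f (g x) = g (f x)) :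
    ∃ t ∈ Subgroup.centralizer (K : Set (AddAut V)) ⊓ specialLinearAut F V,
      ∀ x, t x = x + f x := by
  obtain ⟨t, htSL, ht⟩ :=
    exists_mem_specialLinearAut (det_one_add_of_isNilpotent ⟨2, (sq f).trans hf⟩)
  refine ⟨t, ⟨Subgroup.mem_centralizer_iff.2 fun g hg => AddEquiv.ext fun x => ?_, htSL⟩, ht⟩
  have htf : ∀ y, t y = y + f y := ht
  change g (t x) = t (g x)
  rw [htf, htf, hfK g hg]
  exact map_add g x (f x)

theorem apply_mem_span_singleton_of_le_normalizer_centralizer {K : Subgroup (AddAut V)}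
    (hSL : specialLinearAut F V ≤
      Subgroup.normalizer (Subgroup.centralizer (K : Set (AddAut V)) : Set (AddAut V)))
    {f : End F V} (hff : f * f = 0) (hf : f ≠ 0) {t : AddAut V} (htf : ∀ x, t x = x + f x)
    (ht : t ∈ Subgroup.centralizer (K : Set (AddAut V))) {k : AddAut V} (hk : k ∈ K)
    (hklin : k ∈ linearAut F V) (z : V) : k z ∈ span F {z} := by
  obtain ⟨T, hT⟩ := exists_end_of_mem_linearAut hklin
  rw [← hT]
  refine apply_mem_span_singleton_of_commute_conj hff hf (fun s => LinearMap.ext fun x => ?_) z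
  let s' : AddAut V := s.toLinearEquiv.toAddEquiv
  have hconj := Subgroup.mem_centralizer_iff.1
    ((Subgroup.mem_normalizer_iff.1 (hSL ⟨s, rfl⟩) t).1 ht) k hk
  have hx : k (s' (t (s'⁻¹ x))) = s' (t (s'⁻¹ (k x))) := DFunLike.congr_fun hconj x
  rw [htf, htf, map_add, map_add, map_add, addAut_apply_inv_self, addAut_apply_inv_self,
    add_right_inj, ← hT, ← hT] at hx
  exact hx

theorem exists_linearOrbitSpan_eq_top_of_scalar [Finite F] [Nontrivial V]
    (hH : H ≤ semilinearAut F V)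
    (hirr : ∀ W : Submodule F V, (∀ h ∈ H, ∀ w ∈ W, h w ∈ W) → W = ⊥ ∨ W = ⊤)
    (hscalar : ∀ h ∈ H ⊓ linearAut F V, ∀ v, h v ∈ span F {v}) :
    ∃ w : V, linearOrbitSpan F H w = ⊤ := by
  obtain ⟨w, hw0, hw⟩ := exists_ne_zero_forall_apply_mem_span_singleton hH hscalar
  have htop : span F {w} = ⊤ := by
    refine (hirr _ fun h hh x hx => ?_).resolve_left (span_singleton_eq_bot.not.2 hw0)
    obtain ⟨c, rfl⟩ := mem_span_singleton.1 hx
    obtain ⟨σ, hσ⟩ := mem_semilinearAut.1 (hH hh)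
    exact hσ c w ▸ smul_mem _ _ (hw h hh)
  exact ⟨w, top_le_iff.1 <| htop ▸
    (span_singleton_le_iff_mem _ _).2 (mem_linearOrbitSpan_self w)⟩

theorem exists_linearOrbitSpan_eq_top_of_irreducible [Finite F] [FiniteDimensional F V]
    (hH : H ≤ semilinearAut F V)
    (hirr : ∀ W : Submodule F V, (∀ h ∈ H, ∀ w ∈ W, h w ∈ W) → W = ⊥ ∨ W = ⊤)
    (hmax : ∀ S, H ≤ S → specialLinearAut F V ≤ S ∨ S ⊓ specialLinearAut F V ≤ H) :
    ∃ v : V, linearOrbitSpan F H v = ⊤ := by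
  by_contra! hcyc
  obtain ⟨v, f, hff, hfv, hfH⟩ :=
    exists_end_mul_self_eq_zero_of_linearOrbitSpan_ne_top hH hirr hcyc
  have hfv0 : f v ≠ 0 := fun h => hfv (h ▸ zero_mem _)
  obtain ⟨t, ⟨htC, htSL⟩, htf⟩ := exists_mem_centralizer_of_end_mul_self_eq_zero hff hfH
  obtain hSL | htH := hmax _ <|
    (le_normalizer_inf_linearAut hH).trans (normalizer_le_normalizer_centralizer _)
  · have := nontrivial_of_ne _ _ hfv0
    obtain ⟨w, hw⟩ := exists_linearOrbitSpan_eq_top_of_scalar hH hirr fun h hh =>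
      apply_mem_span_singleton_of_le_normalizer_centralizer hSL hff
        (fun hf => hfv0 (LinearMap.congr_fun hf v)) htf htC hh hh.2
    exact hcyc w hw
  · have htv : v + f v ∈ linearOrbitSpan F H v := htf v ▸ apply_mem_linearOrbitSpan
      ⟨htH ⟨Subgroup.le_normalizer htC, htSL⟩, specialLinearAut_le_linearAut htSL⟩ v
    exact hfv ((Submodule.add_mem_iff_right _ (mem_linearOrbitSpan_self v)).1 htv)

end Irreducible

theorem maximal_subgroup_cyclic_module_general {F V : Type*} [Field F] [Finite F] [AddCommGroup V]
    [Module F V] [FiniteDimensional F V] {G H : Subgroup (AddAut V)}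
    (hG : specialLinearAut F V ≤ G) (hH : H ≤ semilinearAut F V) (hGH : IsCoatom (H.subgroupOf G)) :
    ∃ v : V, linearOrbitSpan F H v = ⊤ := by
  by_cases hirr : ∀ W : Submodule F V, (∀ h ∈ H, ∀ w ∈ W, h w ∈ W) → W = ⊥ ∨ W = ⊤
  · exact exists_linearOrbitSpan_eq_top_of_irreducible hH hirr fun S =>
      le_or_inf_le_of_isCoatom_subgroupOf hGH hG
  · push Not at hirr
    obtain ⟨W, hWH, hbot, htop⟩ := hirr
    have hSL := (le_or_inf_le_of_isCoatom_subgroupOf hGH hG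
      (le_submoduleStabilizer hWH)).resolve_left
      (not_specialLinearAut_le_submoduleStabilizer hbot htop)
    obtain ⟨v, -, hv⟩ := SetLike.exists_of_lt htop.lt_top
    exact ⟨v, linearOrbitSpan_eq_top_of_notMem hSL hv⟩

/-- Let `V` be a nonzero finite-dimensional vector space over a finite field `F`.
Inside the group `AddAut V` of additive automorphisms of `V`, let `ΓL` be the
subgroup of semilinear automorphisms (those `f` with `f (c • v) = σ c • f v` for
some field automorphism `σ` of `F`), `GLV ≤ ΓL` the `F`-linear ones, and
`SLV ≤ GLV` those of determinant `1`.  If `SLV ≤ G ≤ ΓL` and `H` is a maximal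
subgroup of `G`, then `V` is a cyclic `F(H ∩ GLV)`-module: there is `v : V` whose
`H ∩ GLV`-orbit spans `V` over `F`. -/
theorem maximal_subgroup_cyclic_module
    (F : Type) [Field F] [Fintype F]
    (V : Type) [AddCommGroup V] [Module F V] [FiniteDimensional F V]
    [Nontrivial V]
    (ΓL : Subgroup (AddAut V))
    (hΓL : ∀ f : AddAut V, f ∈ ΓL ↔
      ∃ σ : F ≃+* F, ∀ (c : F) (v : V), f (c • v) = σ c • f v)
    (GLV : Subgroup (AddAut V))
    (hGLV : ∀ f : AddAut V, f ∈ GLV ↔ ∀ (c : F) (v : V), f (c • v) = c • f v)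
    (SLV : Subgroup (AddAut V))
    (hSLV : ∀ f : AddAut V, f ∈ SLV ↔
      ∃ g : V →ₗ[F] V, LinearMap.det g = 1 ∧ ∀ v : V, g v = f v)
    (G : Subgroup (AddAut V)) (hSG : SLV ≤ G) (hGΓ : G ≤ ΓL)
    (H : Subgroup (AddAut V)) (hHG : H ≤ G) (hH : IsCoatom (H.subgroupOf G)) :
    ∃ v : V, Submodule.span F {w : V | ∃ f ∈ H ⊓ GLV, w = f v} = ⊤ := by
  obtain rfl : GLV = linearAut F V := Subgroup.ext hGLV
  refine maximal_subgroup_cyclic_module_general (G := G) ?_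
    (fun f hf => mem_semilinearAut.2 ((hΓL f).1 (hGΓ (hHG hf)))) hH
  rintro _ ⟨s, rfl⟩
  exact hSG ((hSLV _).2 ⟨s.toLinearEquiv, s.det_eq_one, fun _ => rfl⟩)
end
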